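/- arXiv:1307.0237 — 5 statements merged into one kernel-verified Lean document; each statement's English description precedes it below -/
import Mathlib

section
/- Existence and uniqueness of the stationary probability for the Gibbs generator: let θ ∈ (0,1/2], let A : X → ℝ be normalized Lipschitz and V : X → ℝ Lipschitz, and let λ ∈ ℝ and a Lipschitz F ∈ C(X,ℝ) with F > 0 satisfy 𝓛_A F = (1 − V + λ)·F pointwise; set γ_V := 1 − V + λ and B_V := A + log F − log F∘σ − log γ_V∘σ. Then there exists exactly one Borel probability ρ on X such that ∫ γ_V(x)·Σ_{a=1}^d e^{B_V(ax)}·( f(ax) − f(x) ) dρ(x) = 0 for every f ∈ C(X,ℝ). -/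
/-!
By the eigenvalue equation, `γ_V > 0` and `p_a(x) = e^{B_V(ax)}` are Lipschitz transition
probabilities: `Σ_a p_a(x) = 1`. With `L f (x) = Σ_a p_a(x) f(ax)` the condition on `ρ` reads
`∫ γ_V (L f - f) dρ = 0`, that is, the finite measure `γ_V ρ` is fixed by the dual of `L`.

The core is `IsTransition.exists_limit`: for every continuous `f` the iterates `Lⁿ f` converge
uniformly to a constant `ℓ(f)`. A Lasota–Yorke estimate gives all iterates a common modulus of
continuity `W` (`IsTransition.modulus_pow`). Since one `p_a` is at least `c > 0`, comparing two
points along the words `a⋯a` of length `m` bounds the oscillation of `Lᵐ g` by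
`cᵐ W(m) + (1 - cᵐ) osc(g)` for each iterate `g` (`IsTransition.contraction_pow`). The infimum `O`
of the oscillations therefore satisfies `O ≤ W(m)` for all `m`, so it vanishes.

Given `ℓ`, integrating against `γ_V ρ` for a stationary `ρ` and passing to the limit gives
`∫ γ_V f dρ = ℓ(f) ∫ γ_V dρ`, so `∫ f dρ = ℓ(f/γ_V) / ℓ(1/γ_V)`, which is uniqueness. Conversely
the right-hand side is a normalized positive functional, and the probability representing it by
the Riesz–Markov–Kakutani theorem is stationary because `ℓ ∘ L = ℓ`.
-/

open MeasureTheory Filter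

noncomputable section

/-- The concatenation `a·x`: `(ax)(0) = a`, `(ax)(n+1) = x n`. -/
def cons {d : ℕ} (a : Fin d) (x : ℕ → Fin d) : ℕ → Fin d
  | 0 => a
  | n + 1 => x n

/-- The shift map `σ` on the Bernoulli space. -/
def shift {d : ℕ} (x : ℕ → Fin d) : ℕ → Fin d := fun n => x (n + 1)

open Classical in
/-- The metric `d_θ` on the Bernoulli space: `d_θ(x,y) = θ^{min{n : x n ≠ y n}}` for `x ≠ y`. -/
def distTheta {d : ℕ} (θ : ℝ) (x y : ℕ → Fin d) : ℝ :=
  if x = y then 0 else θ ^ sInf {n : ℕ | x n ≠ y n}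

/-- The Ruelle operator with potential `B`, applied pointwise:
`(𝓛_B g)(x) = Σ_{a} e^{B(ax)} g(ax)`. -/
def ruelleSum {d : ℕ} (B : (ℕ → Fin d) → ℝ) (g : (ℕ → Fin d) → ℝ) (x : ℕ → Fin d) : ℝ :=
  ∑ a : Fin d, Real.exp (B (cons a x)) * g (cons a x)

/-- The exponential `e^B` of a bounded operator `B` on `C(X,ℝ)`, applied to `f`:
`e^B f = Σ_{n=0}^∞ (1/n!) Bⁿ f`. -/
def opExp {X : Type*} [TopologicalSpace X] [CompactSpace X]
    (B : C(X, ℝ) →L[ℝ] C(X, ℝ)) (f : C(X, ℝ)) : C(X, ℝ) :=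
  ∑' n : ℕ, ((Nat.factorial n : ℝ)⁻¹ • (B ^ n) f)

/-- `γ_V = 1 - V + λ`. -/
def gammaV {d : ℕ} (V : (ℕ → Fin d) → ℝ) (lam : ℝ) (x : ℕ → Fin d) : ℝ := 1 - V x + lam

/-- `B_V = A + log F - log F∘σ - log γ_V∘σ`. -/
def BV {d : ℕ} (A V : (ℕ → Fin d) → ℝ) (lam : ℝ) (F : (ℕ → Fin d) → ℝ)
    (y : ℕ → Fin d) : ℝ :=
  A y + Real.log (F y) - Real.log (F (shift y)) - Real.log (gammaV V lam (shift y))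

/-! ### Cylinders and continuity -/

/-- `x` and `y` have the same first `k` symbols. -/
def Agree {d : ℕ} (k : ℕ) (x y : ℕ → Fin d) : Prop := ∀ i < k, x i = y i

lemma Agree.cons {d : ℕ} {k : ℕ} {x y : ℕ → Fin d} (h : Agree k x y) (a : Fin d) :
    Agree (k + 1) (cons a x) (cons a y) := by
  intro i hi
  cases i with
  | zero => rfl
  | succ i => exact h i (by omega)

lemma Agree.symm {d : ℕ} {k : ℕ} {x y : ℕ → Fin d} (h : Agree k x y) : Agree k y x :=
  fun i hi => (h i hi).symm

lemma agree_iterate_cons {d : ℕ} (a : Fin d) (x y : ℕ → Fin d) (n : ℕ) :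
    Agree n ((cons a)^[n] x) ((cons a)^[n] y) := by
  induction n with
  | zero => intro i hi; omega
  | succ n ih =>
    rw [Function.iterate_succ_apply', Function.iterate_succ_apply']
    exact ih.cons a

lemma continuous_cons {d : ℕ} (a : Fin d) : Continuous (cons a : (ℕ → Fin d) → ℕ → Fin d) := by
  refine continuous_pi fun n => ?_
  cases n with
  | zero => exact continuous_const
  | succ n => exact continuous_apply n

lemma shift_cons {d : ℕ} (a : Fin d) (x : ℕ → Fin d) : shift (cons a x) = x := rfl

lemma distTheta_le {d : ℕ} {θ : ℝ} (h0 : 0 < θ) (h1 : θ < 1) {k : ℕ} {x y : ℕ → Fin d}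
    (h : Agree k x y) : distTheta θ x y ≤ θ ^ k := by
  unfold distTheta
  split_ifs with hxy
  · positivity
  · apply pow_le_pow_of_le_one h0.le h1.le
    have hne : {n : ℕ | x n ≠ y n}.Nonempty := by
      by_contra hcon
      rw [Set.not_nonempty_iff_eq_empty] at hcon
      apply hxy
      funext n
      by_contra hn
      have : n ∈ {n : ℕ | x n ≠ y n} := hn
      simp [hcon] at this
    refine le_csInf hne fun n hn => ?_
    by_contra hlt
    exact hn (h n (by omega))

/-- A `d_θ`-Lipschitz function, in the form used below: its variation on cylinders of
length `k` is at most a constant times `θ ^ k`. -/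
lemma modulus_of_lip {d : ℕ} {θ : ℝ} (h0 : 0 < θ) (h1 : θ < 1) {g : (ℕ → Fin d) → ℝ} {C : ℝ}
    (h : ∀ x y, |g x - g y| ≤ C * distTheta θ x y) {k : ℕ} {x y : ℕ → Fin d}
    (hxy : Agree k x y) : |g x - g y| ≤ |C| * θ ^ k := by
  have hd : 0 ≤ distTheta θ x y := by
    unfold distTheta
    split_ifs
    · rfl
    · positivity
  calc |g x - g y| ≤ C * distTheta θ x y := h x y
    _ ≤ |C| * distTheta θ x y := mul_le_mul_of_nonneg_right (le_abs_self C) hd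
    _ ≤ |C| * θ ^ k := mul_le_mul_of_nonneg_left (distTheta_le h0 h1 hxy) (abs_nonneg C)

lemma continuous_of_modulus {d : ℕ} {θ : ℝ} (h0 : 0 < θ) (h1 : θ < 1) {g : (ℕ → Fin d) → ℝ}
    {C : ℝ} (h : ∀ k x y, Agree k x y → |g x - g y| ≤ C * θ ^ k) : Continuous g := by
  rw [continuous_iff_continuousAt]
  intro x
  rw [ContinuousAt, Metric.tendsto_nhds]
  intro ε hε
  have ht : Tendsto (fun k : ℕ => C * θ ^ k) atTop (nhds 0) := by
    simpa using (tendsto_pow_atTop_nhds_zero_of_lt_one h0.le h1).const_mul C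
  obtain ⟨k, hk⟩ := (ht.eventually (gt_mem_nhds hε)).exists
  have hopen := (PiNat.isOpen_cylinder (fun _ => Fin d) x k).mem_nhds (PiNat.self_mem_cylinder x k)
  filter_upwards [hopen] with y hy
  rw [Real.dist_eq]
  exact (h k y x (PiNat.mem_cylinder_iff.1 hy)).trans_lt hk

/-- Uniform continuity on the compact Bernoulli space, in terms of cylinders. -/
lemma exists_agree_le {d : ℕ} (f : C((ℕ → Fin d), ℝ)) {ε : ℝ} (hε : 0 < ε) :
    ∃ k, ∀ x y, Agree k x y → |f x - f y| ≤ ε := by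
  let _ : MetricSpace (ℕ → Fin d) := PiNat.metricSpace
  have hu := CompactSpace.uniformContinuous_of_continuous f.continuous
  rw [Metric.uniformContinuous_iff] at hu
  obtain ⟨δ, hδ, hu⟩ := hu ε hε
  obtain ⟨k, hk⟩ := exists_pow_lt_of_lt_one hδ (by norm_num : (1 / 2 : ℝ) < 1)
  refine ⟨k, fun x y hxy => ?_⟩
  have := hu (a := x) (b := y)
    ((PiNat.mem_cylinder_iff_dist_le.1 (PiNat.mem_cylinder_iff.2 hxy)).trans_lt hk)
  rw [Real.dist_eq] at this
  exact this.le

/-! ### The transfer operator of a system of transition probabilities -/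

/-- The operator `f ↦ Σ_a p_a(x) f(ax)` on `C(X,ℝ)`. -/
def transfer {d : ℕ} (p : Fin d → C((ℕ → Fin d), ℝ)) :
    C((ℕ → Fin d), ℝ) →ₗ[ℝ] C((ℕ → Fin d), ℝ) where
  toFun f := ∑ a, p a * f.comp ⟨cons a, continuous_cons a⟩
  map_add' f g := by
    ext x
    simp [mul_add, Finset.sum_add_distrib]
  map_smul' r f := by
    ext x
    simp [Finset.mul_sum]

lemma transfer_apply {d : ℕ} (p : Fin d → C((ℕ → Fin d), ℝ)) (f : C((ℕ → Fin d), ℝ))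
    (x : ℕ → Fin d) : transfer p f x = ∑ a, p a x * f (cons a x) := by
  simp [transfer]

/-- Lipschitz transition probabilities on the preimages of a point, with one of them,
of index `a₀`, bounded below by `c > 0`. -/
structure IsTransition {d : ℕ} (p : Fin d → C((ℕ → Fin d), ℝ)) (θ C c : ℝ) (a₀ : Fin d) :
    Prop where
  θ_pos : 0 < θ
  θ_lt : θ < 1
  C_nonneg : 0 ≤ C
  c_pos : 0 < c
  c_le : ∀ x, c ≤ p a₀ x
  nonneg : ∀ a x, 0 ≤ p a x
  sum_eq : ∀ x, ∑ a, p a x = 1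
  lip : ∀ a k x y, Agree k x y → |p a x - p a y| ≤ C * θ ^ k

/-- The values of `f` lie in an interval of length `o`. -/
def Osc {d : ℕ} (f : C((ℕ → Fin d), ℝ)) (o : ℝ) : Prop := ∃ m, ∀ x, m ≤ f x ∧ f x ≤ m + o

lemma osc_of_sub_le {d : ℕ} [Nonempty (Fin d)] {f : C((ℕ → Fin d), ℝ)} {o : ℝ}
    (h : ∀ x y, f x - f y ≤ o) : Osc f o := by
  obtain ⟨z, -, hz⟩ := isCompact_univ.exists_isMinOn (Set.univ_nonempty) f.continuous.continuousOn
  refine ⟨f z, fun x => ⟨hz (Set.mem_univ x), ?_⟩⟩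
  linarith [h x z]

section Transfer

variable {d : ℕ} {p : Fin d → C((ℕ → Fin d), ℝ)} {θ C c : ℝ} {a₀ : Fin d}

lemma IsTransition.c_le_one (hp : IsTransition p θ C c a₀) : c ≤ 1 := by
  let x : ℕ → Fin d := fun _ => a₀
  calc c ≤ p a₀ x := hp.c_le x
    _ ≤ ∑ a, p a x :=
      Finset.single_le_sum (f := fun a => p a x) (fun a _ => hp.nonneg a x) (Finset.mem_univ a₀)
    _ = 1 := hp.sum_eq x

lemma IsTransition.le_transfer (hp : IsTransition p θ C c a₀) {f : C((ℕ → Fin d), ℝ)} {m : ℝ}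
    (h : ∀ x, m ≤ f x) (x : ℕ → Fin d) : m ≤ transfer p f x := by
  rw [transfer_apply]
  calc m = ∑ a, p a x * m := by rw [← Finset.sum_mul, hp.sum_eq, one_mul]
    _ ≤ _ := Finset.sum_le_sum fun a _ => mul_le_mul_of_nonneg_left (h _) (hp.nonneg a x)

lemma IsTransition.transfer_le (hp : IsTransition p θ C c a₀) {f : C((ℕ → Fin d), ℝ)} {m : ℝ}
    (h : ∀ x, f x ≤ m) (x : ℕ → Fin d) : transfer p f x ≤ m := by
  rw [transfer_apply]
  calc _ ≤ ∑ a, p a x * m :=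
        Finset.sum_le_sum fun a _ => mul_le_mul_of_nonneg_left (h _) (hp.nonneg a x)
    _ = m := by rw [← Finset.sum_mul, hp.sum_eq, one_mul]

lemma IsTransition.pow_bounds (hp : IsTransition p θ C c a₀) {m M : ℝ} (n : ℕ) :
    ∀ {f : C((ℕ → Fin d), ℝ)}, (∀ x, m ≤ f x ∧ f x ≤ M) →
      ∀ x, m ≤ (transfer p ^ n) f x ∧ (transfer p ^ n) f x ≤ M := by
  induction n with
  | zero => intro f h; simpa using h
  | succ n ih =>
    intro f h
    rw [pow_succ, Module.End.mul_apply]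
    exact ih fun x => ⟨hp.le_transfer (fun x => (h x).1) x, hp.transfer_le (fun x => (h x).2) x⟩

lemma IsTransition.osc_pow (hp : IsTransition p θ C c a₀) {f : C((ℕ → Fin d), ℝ)} {o : ℝ}
    (h : Osc f o) (n : ℕ) : Osc ((transfer p ^ n) f) o := by
  obtain ⟨m, hm⟩ := h
  exact ⟨m, hp.pow_bounds n hm⟩

lemma IsTransition.transfer_one (hp : IsTransition p θ C c a₀) : transfer p 1 = 1 := by
  ext x
  simp [transfer_apply, hp.sum_eq]

/-- Lasota–Yorke inequality in terms of moduli of continuity. -/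
lemma IsTransition.modulus_transfer (hp : IsTransition p θ C c a₀) {f : C((ℕ → Fin d), ℝ)} {o : ℝ}
    {W : ℕ → ℝ} (ho : Osc f o) (hW : ∀ k x y, Agree k x y → |f x - f y| ≤ W k) (k : ℕ)
    (x y : ℕ → Fin d) (hxy : Agree k x y) :
    |transfer p f x - transfer p f y| ≤ W (k + 1) + d * C * o * θ ^ k := by
  obtain ⟨m, hm⟩ := ho
  -- Subtracting `m` from `f` in the second sum is free because the `p_a` sum to one.
  have key : transfer p f x - transfer p f y =
      ∑ a, p a x * (f (cons a x) - f (cons a y)) + ∑ a, (p a x - p a y) * (f (cons a y) - m) := by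
    have h1 : ∑ a, (p a x - p a y) * m = 0 := by
      rw [← Finset.sum_mul, Finset.sum_sub_distrib, hp.sum_eq, hp.sum_eq]; ring
    rw [transfer_apply, transfer_apply, ← Finset.sum_sub_distrib, ← Finset.sum_add_distrib,
      ← sub_zero (∑ a, (_ : ℝ)), ← h1, ← Finset.sum_sub_distrib]
    exact Finset.sum_congr rfl fun a _ => by ring
  rw [key]
  refine (abs_add_le _ _).trans (add_le_add ?_ ?_)
  · calc _ ≤ ∑ a, |p a x * (f (cons a x) - f (cons a y))| := Finset.abs_sum_le_sum_abs _ _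
      _ ≤ ∑ a, p a x * W (k + 1) := by
        refine Finset.sum_le_sum fun a _ => ?_
        rw [abs_mul, abs_of_nonneg (hp.nonneg a x)]
        exact mul_le_mul_of_nonneg_left (hW _ _ _ (hxy.cons a)) (hp.nonneg a x)
      _ = W (k + 1) := by rw [← Finset.sum_mul, hp.sum_eq, one_mul]
  · calc _ ≤ ∑ a, |(p a x - p a y) * (f (cons a y) - m)| := Finset.abs_sum_le_sum_abs _ _
      _ ≤ ∑ _a : Fin d, (C * θ ^ k) * o := by
        refine Finset.sum_le_sum fun a _ => ?_
        rw [abs_mul]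
        have hb := hm (cons a y)
        exact mul_le_mul (hp.lip a k x y hxy) (by rw [abs_le]; constructor <;> linarith)
          (abs_nonneg _) (mul_nonneg hp.C_nonneg (pow_nonneg hp.θ_pos.le _))
      _ = d * C * o * θ ^ k := by simp; ring

/-- All iterates of the operator on `f` share one modulus of continuity: the modulus `ω` of `f`
plus a geometric term, which absorbs the error in the Lasota–Yorke inequality. -/
lemma IsTransition.modulus_pow (hp : IsTransition p θ C c a₀) {o : ℝ} {ω : ℕ → ℝ}
    (hω : Antitone ω) {f : C((ℕ → Fin d), ℝ)} (ho : Osc f o)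
    (hW : ∀ k x y, Agree k x y → |f x - f y| ≤ ω k) (n : ℕ) :
    ∀ k x y, Agree k x y →
      |(transfer p ^ n) f x - (transfer p ^ n) f y| ≤ ω k + d * C * o / (1 - θ) * θ ^ k := by
  have h1 : 0 < 1 - θ := by linarith [hp.θ_lt]
  have ho0 : 0 ≤ o := by
    obtain ⟨m, hm⟩ := ho
    linarith [(hm fun _ => a₀).1, (hm fun _ => a₀).2]
  have hC := hp.C_nonneg
  have hθ := hp.θ_pos
  induction n with
  | zero =>
    intro k x y hxy
    have : 0 ≤ d * C * o / (1 - θ) * θ ^ k := by positivity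
    simpa using (hW k x y hxy).trans (le_add_of_nonneg_right this)
  | succ n ih =>
    intro k x y hxy
    rw [pow_succ', Module.End.mul_apply]
    refine (hp.modulus_transfer (hp.osc_pow ho n) ih k x y hxy).trans ?_
    have : d * C * o / (1 - θ) * θ ^ (k + 1) + d * C * o * θ ^ k
        = d * C * o / (1 - θ) * θ ^ k := by
      field_simp
      ring
    linarith [hω (Nat.le_succ k)]

/-- With weight `c` the two averages are compared along the common symbol `a₀`. -/
lemma IsTransition.contraction (hp : IsTransition p θ C c a₀) {f : C((ℕ → Fin d), ℝ)} {o : ℝ}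
    (ho : Osc f o) (x y : ℕ → Fin d) :
    transfer p f x - transfer p f y ≤ c * (f (cons a₀ x) - f (cons a₀ y)) + (1 - c) * o := by
  obtain ⟨m, hm⟩ := ho
  have hsplit : ∀ z, (p a₀ z - c) + ∑ a ∈ Finset.univ.erase a₀, p a z = 1 - c := by
    intro z
    have := Finset.add_sum_erase Finset.univ (fun a => p a z) (Finset.mem_univ a₀)
    rw [hp.sum_eq] at this
    linarith
  have hL : ∀ z, transfer p f z = c * f (cons a₀ z) + ((p a₀ z - c) * f (cons a₀ z) +
      ∑ a ∈ Finset.univ.erase a₀, p a z * f (cons a z)) := by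
    intro z
    rw [transfer_apply,
      ← Finset.add_sum_erase Finset.univ (fun a => p a z * f (cons a z)) (Finset.mem_univ a₀)]
    ring
  have hup : (p a₀ x - c) * f (cons a₀ x) + ∑ a ∈ Finset.univ.erase a₀, p a x * f (cons a x)
      ≤ (1 - c) * (m + o) := by
    rw [← hsplit x, add_mul, Finset.sum_mul]
    exact add_le_add (mul_le_mul_of_nonneg_left (hm _).2 (by linarith [hp.c_le x]))
      (Finset.sum_le_sum fun a _ => mul_le_mul_of_nonneg_left (hm _).2 (hp.nonneg a x))
  have hlo : (1 - c) * m ≤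
      (p a₀ y - c) * f (cons a₀ y) + ∑ a ∈ Finset.univ.erase a₀, p a y * f (cons a y) := by
    rw [← hsplit y, add_mul, Finset.sum_mul]
    exact add_le_add (mul_le_mul_of_nonneg_left (hm _).1 (by linarith [hp.c_le y]))
      (Finset.sum_le_sum fun a _ => mul_le_mul_of_nonneg_left (hm _).1 (hp.nonneg a y))
  rw [hL x, hL y]
  linarith

lemma IsTransition.contraction_pow (hp : IsTransition p θ C c a₀) {o : ℝ} (n : ℕ) :
    ∀ {f : C((ℕ → Fin d), ℝ)}, Osc f o → ∀ x y,
      (transfer p ^ n) f x - (transfer p ^ n) f y ≤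
        c ^ n * (f ((cons a₀)^[n] x) - f ((cons a₀)^[n] y)) + (1 - c ^ n) * o := by
  induction n with
  | zero => intro f _ x y; simp
  | succ n ih =>
    intro f ho x y
    have ho' : Osc (transfer p f) o := by simpa using hp.osc_pow ho 1
    rw [pow_succ, Module.End.mul_apply, Function.iterate_succ_apply', Function.iterate_succ_apply']
    have h1 := ih ho' x y
    have h2 := mul_le_mul_of_nonneg_left
      (hp.contraction ho ((cons a₀)^[n] x) ((cons a₀)^[n] y)) (pow_nonneg hp.c_pos.le n)
    rw [pow_succ]
    linarith

/-- The oscillation of the iterates tends to zero: its infimum `O` satisfies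
`O ≤ cᵐ W(m) + (1 - cᵐ) O`, hence `O ≤ W(m)`, for every `m`, where `W` is the common modulus of
continuity of the iterates. -/
lemma IsTransition.exists_osc_le (hp : IsTransition p θ C c a₀) (f : C((ℕ → Fin d), ℝ)) {ε : ℝ}
    (hε : 0 < ε) : ∃ n, Osc ((transfer p ^ n) f) ε := by
  have : Nonempty (Fin d) := ⟨a₀⟩
  set S : Set ℝ := {o | ∃ n, Osc ((transfer p ^ n) f) o} with hS
  have hf0 : Osc f (2 * ‖f‖) := by
    refine ⟨-‖f‖, fun x => ?_⟩
    have := abs_le.1 (f.norm_coe_le_norm x)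
    constructor <;> linarith [this.1, this.2]
  have hne : S.Nonempty := ⟨2 * ‖f‖, 0, by simpa using hf0⟩
  have hbdd : BddBelow S := by
    refine ⟨0, ?_⟩
    rintro o ⟨n, m, hm⟩
    linarith [(hm fun _ => a₀).1, (hm fun _ => a₀).2]
  suffices h : sInf S < ε by
    obtain ⟨o, ⟨n, m, hm⟩, ho⟩ := exists_lt_of_csInf_lt hne h
    exact ⟨n, m, fun x => ⟨(hm x).1, by linarith [(hm x).2]⟩⟩
  obtain ⟨K, hK⟩ := exists_agree_le f (half_pos (half_pos hε))
  -- A step function is a sufficient modulus for `f`: it only has to be at most `ε / 4` eventually.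
  set ω : ℕ → ℝ := fun k => if k < K then 2 * ‖f‖ + ε / 2 / 2 else ε / 2 / 2 with hωdef
  have hω : Antitone ω := by
    intro i j hij
    simp only [hωdef]
    have := norm_nonneg f
    split_ifs <;> first | omega | linarith
  have hmod : ∀ k x y, Agree k x y → |f x - f y| ≤ ω k := by
    intro k x y hxy
    simp only [hωdef]
    split_ifs with hk
    · have h1 := abs_le.1 (f.norm_coe_le_norm x)
      have h2 := abs_le.1 (f.norm_coe_le_norm y)
      rw [abs_le]
      constructor <;> linarith [h1.1, h1.2, h2.1, h2.2]
    · exact hK x y fun i hi => hxy i (by omega)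
  set D := d * C * (2 * ‖f‖) / (1 - θ) with hD
  have hO : ∀ m, sInf S ≤ ω m + D * θ ^ m := by
    intro m
    have hcm : 0 < c ^ m := pow_pos hp.c_pos m
    have hcm1 : c ^ m ≤ 1 := pow_le_one₀ hp.c_pos.le hp.c_le_one
    have hstep : ∀ o ∈ S, sInf S ≤ c ^ m * (ω m + D * θ ^ m) + (1 - c ^ m) * o := by
      rintro o ⟨n, ho⟩
      refine csInf_le hbdd ⟨m + n, ?_⟩
      rw [pow_add, Module.End.mul_apply]
      refine osc_of_sub_le fun x y => (hp.contraction_pow m ho x y).trans ?_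
      have := (le_abs_self _).trans
        (hp.modulus_pow hω hf0 hmod n m _ _ (agree_iterate_cons a₀ x y m))
      linarith [mul_le_mul_of_nonneg_left this hcm.le]
    have hlim : sInf S ≤ c ^ m * (ω m + D * θ ^ m) + (1 - c ^ m) * sInf S := by
      refine le_of_forall_pos_le_add fun δ hδ => ?_
      obtain ⟨o, hoS, ho⟩ := exists_lt_of_csInf_lt hne (lt_add_of_pos_right (sInf S) hδ)
      have h1 : (1 - c ^ m) * o ≤ (1 - c ^ m) * (sInf S + δ) :=
        mul_le_mul_of_nonneg_left ho.le (by linarith)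
      nlinarith [hstep o hoS, mul_pos hcm hδ]
    have : c ^ m * sInf S ≤ c ^ m * (ω m + D * θ ^ m) := by linarith
    exact le_of_mul_le_mul_left this hcm
  have ht : Tendsto (fun m : ℕ => D * θ ^ m) atTop (nhds 0) := by
    simpa using (tendsto_pow_atTop_nhds_zero_of_lt_one hp.θ_pos.le hp.θ_lt).const_mul D
  obtain ⟨m, hm, hmK⟩ := ((ht.eventually (gt_mem_nhds (half_pos hε))).and
    (eventually_ge_atTop K)).exists
  have := hO m
  have hωm : ω m = ε / 2 / 2 := by simp only [hωdef]; rw [if_neg (by omega)]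
  linarith

/-- Ruelle's convergence theorem for a normalized potential: the iterates on `f` converge
uniformly to a constant, which depends linearly on `f`. -/
theorem IsTransition.exists_limit (hp : IsTransition p θ C c a₀) :
    ∃ ℓ : C((ℕ → Fin d), ℝ) →ₗ[ℝ] ℝ, ∀ f, ∀ ε > 0, ∃ N, ∀ n ≥ N, ∀ x,
      |(transfer p ^ n) f x - ℓ f| ≤ ε := by
  have hcau : ∀ f : C((ℕ → Fin d), ℝ), ∀ ε > 0, ∃ N, ∃ m, ∀ n ≥ N, ∀ x,
      m ≤ (transfer p ^ n) f x ∧ (transfer p ^ n) f x ≤ m + ε := by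
    intro f ε hε
    obtain ⟨N, m, hm⟩ := hp.exists_osc_le f hε
    refine ⟨N, m, fun n hn => ?_⟩
    obtain ⟨k, rfl⟩ := Nat.exists_eq_add_of_le' hn
    rw [pow_add, Module.End.mul_apply]
    exact hp.pow_bounds k hm
  let x₀ : ℕ → Fin d := fun _ => a₀
  have hex : ∀ f : C((ℕ → Fin d), ℝ), ∃ l,
      Tendsto (fun n => (transfer p ^ n) f x₀) atTop (nhds l) := by
    intro f
    apply cauchySeq_tendsto_of_complete
    rw [Metric.cauchySeq_iff']
    intro ε hε
    obtain ⟨N, m, h⟩ := hcau f (ε / 2) (half_pos hε)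
    refine ⟨N, fun n hn => ?_⟩
    have h1 := h n hn x₀
    have h2 := h N le_rfl x₀
    rw [Real.dist_eq, abs_lt]
    constructor <;> linarith [h1.1, h1.2, h2.1, h2.2]
  choose l hl using hex
  refine ⟨{ toFun := l, map_add' := fun f g => ?_, map_smul' := fun r f => ?_ }, ?_⟩
  · refine tendsto_nhds_unique (hl (f + g)) ?_
    simpa using (hl f).add (hl g)
  · refine tendsto_nhds_unique (hl (r • f)) ?_
    simpa using (hl f).const_mul r
  · intro f ε hε
    obtain ⟨N, m, h⟩ := hcau f ε hε
    have hlo : m ≤ l f := ge_of_tendsto (hl f)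
      (eventually_atTop.2 ⟨N, fun n hn => (h n hn x₀).1⟩)
    have hup : l f ≤ m + ε := le_of_tendsto (hl f)
      (eventually_atTop.2 ⟨N, fun n hn => (h n hn x₀).2⟩)
    refine ⟨N, fun n hn x => ?_⟩
    have := h n hn x
    change |(transfer p ^ n) f x - l f| ≤ ε
    rw [abs_le]
    constructor <;> linarith [this.1, this.2]

/-! ### Stationary probabilities with a weight -/

/-- A positive linear functional on `C(X,ℝ)` with value one at `1` is integration against a
probability. -/
lemma exists_probability {X : Type*} [TopologicalSpace X] [CompactSpace X] [T2Space X]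
    [MeasurableSpace X] [BorelSpace X] (Λ : C(X, ℝ) →ₗ[ℝ] ℝ) (hΛ : ∀ f, (∀ x, 0 ≤ f x) → 0 ≤ Λ f)
    (h1 : Λ 1 = 1) :
    ∃ μ : Measure X, IsProbabilityMeasure μ ∧ ∀ f : C(X, ℝ), ∫ x, f x ∂μ = Λ f := by
  let Λ' : CompactlySupportedContinuousMap X ℝ →ₗ[ℝ] ℝ :=
    { toFun := fun f => Λ f.toContinuousMap
      map_add' := fun f g => Λ.map_add f.toContinuousMap g.toContinuousMap
      map_smul' := fun r f => Λ.map_smul r f.toContinuousMap }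
  let P : CompactlySupportedContinuousMap X ℝ →ₚ[ℝ] ℝ :=
    PositiveLinearMap.mk₀ Λ' fun f hf => hΛ f.toContinuousMap hf
  have hint : ∀ f : C(X, ℝ), ∫ x, f x ∂(RealRMK.rieszMeasure P) = Λ f := fun f =>
    RealRMK.integral_rieszMeasure P (CompactlySupportedContinuousMap.continuousMapEquiv f)
  refine ⟨RealRMK.rieszMeasure P, ⟨?_⟩, hint⟩
  have h := hint 1
  rw [h1] at h
  simp only [ContinuousMap.one_apply, integral_const, smul_eq_mul, mul_one, Measure.real] at h
  exact (ENNReal.toReal_eq_one_iff _).1 h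

/-- For a positive weight `γ`, exactly one probability `ρ` makes `γ ρ` invariant under the dual
of the transfer operator. -/
theorem IsTransition.existsUnique_weighted (hp : IsTransition p θ C c a₀)
    (γ : C((ℕ → Fin d), ℝ)) (hγ : ∀ x, 0 < γ x) :
    ∃! ρ : Measure (ℕ → Fin d), IsProbabilityMeasure ρ ∧
      ∀ f : C((ℕ → Fin d), ℝ), ∫ x, γ x * (transfer p f x - f x) ∂ρ = 0 := by
  have : Nonempty (Fin d) := ⟨a₀⟩
  obtain ⟨ℓ, hℓ⟩ := hp.exists_limit
  let x₀ : ℕ → Fin d := fun _ => a₀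
  have hlim : ∀ f, Tendsto (fun n => (transfer p ^ n) f x₀) atTop (nhds (ℓ f)) := by
    intro f
    rw [Metric.tendsto_atTop]
    intro ε hε
    obtain ⟨N, hN⟩ := hℓ f (ε / 2) (half_pos hε)
    exact ⟨N, fun n hn => by rw [Real.dist_eq]; linarith [hN n hn x₀]⟩
  have hℓge : ∀ (f : C((ℕ → Fin d), ℝ)) (m : ℝ), (∀ x, m ≤ f x) → m ≤ ℓ f := by
    intro f m hm
    refine ge_of_tendsto (hlim f) (Eventually.of_forall fun n => ?_)
    exact (hp.pow_bounds (m := m) (M := ‖f‖) n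
      (fun x => ⟨hm x, (le_abs_self _).trans (f.norm_coe_le_norm x)⟩) x₀).1
  have hℓL : ∀ f, ℓ (transfer p f) = ℓ f := by
    intro f
    refine tendsto_nhds_unique (hlim _) ?_
    have := (tendsto_add_atTop_iff_nat 1).2 (hlim f)
    simpa [pow_succ] using this
  let γi : C((ℕ → Fin d), ℝ) := ⟨fun x => (γ x)⁻¹, γ.continuous.inv₀ fun x => (hγ x).ne'⟩
  have hγγi : ∀ x, γ x * γi x = 1 := fun x => mul_inv_cancel₀ (hγ x).ne'
  have hγi : 0 < ℓ γi := by
    obtain ⟨z, -, hz⟩ :=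
      isCompact_univ.exists_isMinOn (Set.univ_nonempty) γi.continuous.continuousOn
    exact (inv_pos.2 (hγ z) : 0 < γi z).trans_le (hℓge γi (γi z) fun x => hz (Set.mem_univ x))
  let Λ : C((ℕ → Fin d), ℝ) →ₗ[ℝ] ℝ :=
    (ℓ γi)⁻¹ • (ℓ ∘ₗ LinearMap.mulLeft ℝ γi)
  have hΛ : ∀ f, Λ f = (ℓ γi)⁻¹ * ℓ (γi * f) := fun f => rfl
  obtain ⟨μ, hμ, hint⟩ := exists_probability Λ
    (fun f hf => by
      rw [hΛ]
      exact mul_nonneg (inv_nonneg.2 hγi.le)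
        (hℓge _ 0 fun x => mul_nonneg (inv_nonneg.2 (hγ x).le) (hf x)))
    (by rw [hΛ, mul_one, inv_mul_cancel₀ hγi.ne'])
  have huniq : ∀ ρ : Measure (ℕ → Fin d), IsProbabilityMeasure ρ →
      (∀ f : C((ℕ → Fin d), ℝ), ∫ x, γ x * (transfer p f x - f x) ∂ρ = 0) →
      ∀ f : C((ℕ → Fin d), ℝ), ∫ x, f x ∂ρ = Λ f := by
    intro ρ hρ hst
    have hI : ∀ f : C((ℕ → Fin d), ℝ), Integrable f ρ := fun f =>
      f.continuous.integrable_of_hasCompactSupport (HasCompactSupport.of_compactSpace f)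
    have hone : ∀ f : C((ℕ → Fin d), ℝ),
        ∫ x, (γ * transfer p f) x ∂ρ = ∫ x, (γ * f) x ∂ρ := by
      intro f
      rw [← sub_eq_zero, ← integral_sub (hI _) (hI _), ← hst f]
      congr 1
      funext x
      simp only [ContinuousMap.mul_apply]
      ring
    have hpow : ∀ (n : ℕ) (f : C((ℕ → Fin d), ℝ)),
        ∫ x, (γ * (transfer p ^ n) f) x ∂ρ = ∫ x, (γ * f) x ∂ρ := by
      intro n
      induction n with
      | zero => intro f; simp
      | succ n ih =>
        intro f
        rw [pow_succ, Module.End.mul_apply, ih, hone]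
    have hconst : ∀ f : C((ℕ → Fin d), ℝ), ∫ x, (γ * f) x ∂ρ = ℓ f * ∫ x, γ x ∂ρ := by
      intro f
      rw [← sub_eq_zero, ← abs_eq_zero]
      refine le_antisymm (le_of_forall_pos_le_add fun ε hε => ?_) (abs_nonneg _)
      have hK : 0 < ‖γ‖ + 1 := by positivity
      obtain ⟨N, hN⟩ := hℓ f (ε / (‖γ‖ + 1)) (by positivity)
      rw [← hpow N f, ← integral_const_mul, ← integral_sub (hI _) ((hI γ).const_mul _)]
      have := norm_integral_le_of_norm_le_const (μ := ρ) (C := ε)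
        (f := fun x => (γ * (transfer p ^ N) f) x - ℓ f * γ x)
        (Eventually.of_forall fun x => by
          have h1 : (γ * (transfer p ^ N) f) x - ℓ f * γ x
              = γ x * ((transfer p ^ N) f x - ℓ f) := by
            simp only [ContinuousMap.mul_apply]; ring
          rw [h1, norm_mul]
          calc ‖γ x‖ * ‖(transfer p ^ N) f x - ℓ f‖
              ≤ (‖γ‖ + 1) * (ε / (‖γ‖ + 1)) :=
                mul_le_mul ((γ.norm_coe_le_norm x).trans (by linarith)) (hN N le_rfl x)
                  (norm_nonneg _) hK.le
            _ = ε := by field_simp)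
      simpa using this
    have hcancel : ∀ f : C((ℕ → Fin d), ℝ), γ * (γi * f) = f := by
      intro f
      ext x
      simp only [ContinuousMap.mul_apply]
      rw [← mul_assoc, hγγi, one_mul]
    intro f
    have hf := hconst (γi * f)
    have h1 := hconst (γi * 1)
    rw [hcancel] at hf h1
    simp only [ContinuousMap.one_apply, integral_const, smul_eq_mul, mul_one,
      probReal_univ] at h1
    rw [hf, hΛ, eq_inv_of_mul_eq_one_right h1.symm]
    ring
  refine ⟨μ, ⟨hμ, fun f => ?_⟩, ?_⟩
  · have h := hint (γ * (transfer p f - f))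
    rw [hΛ] at h
    have hc : γi * (γ * (transfer p f - f)) = transfer p f - f := by
      ext x
      simp only [ContinuousMap.mul_apply]
      rw [← mul_assoc, mul_comm (γi x), hγγi, one_mul]
    rw [hc, map_sub, hℓL, sub_self, mul_zero] at h
    exact h
  · rintro ρ ⟨hρ, hst⟩
    have := hρ
    refine ext_of_forall_integral_eq_of_IsFiniteMeasure fun f => ?_
    exact (huniq ρ hρ hst f.toContinuousMap).trans (hint f.toContinuousMap).symm

end Transfer

/-! ### The Gibbs generator -/

lemma abs_exp_sub_exp_le {s t : ℝ} (hs : s ≤ 0) (ht : t ≤ 0) :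
    |Real.exp s - Real.exp t| ≤ |s - t| := by
  wlog h : t ≤ s generalizing s t
  · rw [abs_sub_comm, abs_sub_comm s]
    exact this ht hs (by linarith)
  rw [abs_of_nonneg (by linarith [Real.exp_le_exp.2 h]), abs_of_nonneg (by linarith)]
  have h1 : Real.exp t = Real.exp s * Real.exp (t - s) := by rw [← Real.exp_add]; ring_nf
  have h2 := Real.add_one_le_exp (t - s)
  have h3 : Real.exp s ≤ 1 := Real.exp_le_one_iff.2 hs
  nlinarith [Real.exp_pos s]

lemma abs_log_sub_log_le {m s t : ℝ} (hm : 0 < m) (hs : m ≤ s) (ht : m ≤ t) :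
    |Real.log s - Real.log t| ≤ m⁻¹ * |s - t| := by
  wlog h : t ≤ s generalizing s t
  · rw [abs_sub_comm, abs_sub_comm s]
    exact this ht hs (by linarith)
  have ht0 : 0 < t := by linarith
  have hs0 : 0 < s := by linarith
  rw [abs_of_nonneg (by linarith [Real.log_le_log ht0 h]), abs_of_nonneg (by linarith),
    ← Real.log_div hs0.ne' ht0.ne']
  calc Real.log (s / t) ≤ s / t - 1 := Real.log_le_sub_one_of_pos (by positivity)
    _ = t⁻¹ * (s - t) := by field_simp
    _ ≤ m⁻¹ * (s - t) :=
      mul_le_mul_of_nonneg_right (inv_anti₀ hm ht) (by linarith)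

/-- **Existence and uniqueness of the stationary probability for the Gibbs generator.** -/
theorem stmt_14 (d : ℕ) (hd : 2 ≤ d) (θ : ℝ) (hθ0 : 0 < θ) (hθ1 : θ ≤ 1 / 2)
    (A V : (ℕ → Fin d) → ℝ)
    (CA : ℝ) (hALip : ∀ x y, |A x - A y| ≤ CA * distTheta θ x y)
    (hAnorm : ∀ x, ∑ a : Fin d, Real.exp (A (cons a x)) = 1)
    (CV : ℝ) (hVLip : ∀ x y, |V x - V y| ≤ CV * distTheta θ x y)
    (lam : ℝ) (F : C((ℕ → Fin d), ℝ)) (hFpos : ∀ x, 0 < F x)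
    (CF : ℝ) (hFLip : ∀ x y, |F x - F y| ≤ CF * distTheta θ x y)
    (heig : ∀ x, ruelleSum A F x = (1 - V x + lam) * F x) :
    ∃! ρ : Measure (ℕ → Fin d), IsProbabilityMeasure ρ ∧
      ∀ f : C((ℕ → Fin d), ℝ),
        ∫ x, gammaV V lam x *
          ∑ a : Fin d, Real.exp (BV A V lam F (cons a x)) * (f (cons a x) - f x) ∂ρ = 0 := by
  have hθ : θ < 1 := by linarith
  have : Nonempty (Fin d) := ⟨⟨0, by omega⟩⟩
  let a₀ : Fin d := ⟨0, by omega⟩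
  have hVmod : ∀ k x y, Agree k x y → |V x - V y| ≤ |CV| * θ ^ k :=
    fun k x y h => modulus_of_lip hθ0 hθ hVLip h
  have hVc : Continuous V := continuous_of_modulus hθ0 hθ hVmod
  have hFmod : ∀ k x y, Agree k x y → |F x - F y| ≤ |CF| * θ ^ k :=
    fun k x y h => modulus_of_lip hθ0 hθ hFLip h
  let γ : C((ℕ → Fin d), ℝ) := ⟨gammaV V lam, by unfold gammaV; fun_prop⟩
  have hγ : ∀ x, 0 < γ x := by
    intro x
    have h1 : 0 < ruelleSum A F x :=
      Finset.sum_pos (fun a _ => mul_pos (Real.exp_pos _) (hFpos _)) Finset.univ_nonempty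
    rw [heig x] at h1
    exact pos_of_mul_pos_left h1 (hFpos x).le
  obtain ⟨zF, -, hzF⟩ :=
    isCompact_univ.exists_isMinOn (Set.univ_nonempty) F.continuous.continuousOn
  obtain ⟨zγ, -, hzγ⟩ :=
    isCompact_univ.exists_isMinOn (Set.univ_nonempty) γ.continuous.continuousOn
  -- `B_V` is a normalized potential by the eigenvalue equation.
  have hsum : ∀ x, ∑ a, Real.exp (BV A V lam F (cons a x)) = 1 := by
    intro x
    have hexpγ : Real.exp (Real.log (gammaV V lam x)) = γ x := Real.exp_log (hγ x)
    have hterm : ∀ a, Real.exp (BV A V lam F (cons a x)) =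
        Real.exp (A (cons a x)) * F (cons a x) / (γ x * F x) := by
      intro a
      rw [BV, shift_cons, Real.exp_sub, Real.exp_sub, Real.exp_add, Real.exp_log (hFpos _),
        Real.exp_log (hFpos _), hexpγ, div_div, mul_comm (F x)]
    simp_rw [hterm]
    rw [← Finset.sum_div, div_eq_one_iff_eq (mul_pos (hγ x) (hFpos x)).ne']
    exact heig x
  have hle0 : ∀ a x, BV A V lam F (cons a x) ≤ 0 := by
    intro a x
    rw [← Real.exp_le_one_iff, ← hsum x]
    exact Finset.single_le_sum (f := fun a => Real.exp (BV A V lam F (cons a x)))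
      (fun a _ => (Real.exp_pos _).le) (Finset.mem_univ a)
  set C : ℝ := |CA| + (F zF)⁻¹ * |CF| + (F zF)⁻¹ * |CF| + (γ zγ)⁻¹ * |CV| with hC
  have hFi : 0 < (F zF)⁻¹ := inv_pos.2 (hFpos _)
  have hγi : 0 < (γ zγ)⁻¹ := inv_pos.2 (hγ _)
  have hlogF : ∀ k x y, Agree k x y →
      |Real.log (F x) - Real.log (F y)| ≤ (F zF)⁻¹ * |CF| * θ ^ k := by
    intro k x y h
    refine (abs_log_sub_log_le (hFpos zF) (hzF (Set.mem_univ x)) (hzF (Set.mem_univ y))).trans ?_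
    rw [mul_assoc]
    exact mul_le_mul_of_nonneg_left (hFmod k x y h) hFi.le
  have hlogγ : ∀ k x y, Agree k x y →
      |Real.log (gammaV V lam x) - Real.log (gammaV V lam y)| ≤ (γ zγ)⁻¹ * |CV| * θ ^ k := by
    intro k x y h
    refine (abs_log_sub_log_le (hγ zγ) (hzγ (Set.mem_univ x)) (hzγ (Set.mem_univ y))).trans ?_
    rw [mul_assoc]
    refine mul_le_mul_of_nonneg_left ?_ hγi.le
    have h1 : gammaV V lam x - gammaV V lam y = V y - V x := by unfold gammaV; ring
    change |gammaV V lam x - gammaV V lam y| ≤ _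
    rw [h1]
    exact hVmod k y x h.symm
  have hpmod : ∀ a k x y, Agree k x y →
      |Real.exp (BV A V lam F (cons a x)) - Real.exp (BV A V lam F (cons a y))| ≤ C * θ ^ k := by
    intro a k x y h
    refine (abs_exp_sub_exp_le (hle0 a x) (hle0 a y)).trans ?_
    have hc : Agree k (cons a x) (cons a y) := fun i hi => h.cons a i (by omega)
    have h1 := abs_le.1 (modulus_of_lip hθ0 hθ hALip hc)
    have h2 := abs_le.1 (hlogF k _ _ hc)
    have h3 := abs_le.1 (hlogF k _ _ h)
    have h4 := abs_le.1 (hlogγ k _ _ h)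
    simp only [BV, shift_cons]
    rw [abs_le, hC]
    constructor <;> linarith [h1.1, h1.2, h2.1, h2.2, h3.1, h3.2, h4.1, h4.2]
  let p : Fin d → C((ℕ → Fin d), ℝ) := fun a =>
    ⟨fun x => Real.exp (BV A V lam F (cons a x)), continuous_of_modulus hθ0 hθ (hpmod a)⟩
  obtain ⟨zp, -, hzp⟩ :=
    isCompact_univ.exists_isMinOn (Set.univ_nonempty) (p a₀).continuous.continuousOn
  have hp : IsTransition p θ C (p a₀ zp) a₀ :=
    { θ_pos := hθ0
      θ_lt := hθ
      C_nonneg := by positivity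
      c_pos := Real.exp_pos _
      c_le := fun x => hzp (Set.mem_univ x)
      nonneg := fun a x => (Real.exp_pos _).le
      sum_eq := hsum
      lip := hpmod }
  have hmain := hp.existsUnique_weighted γ hγ
  have hgen : ∀ (f : C((ℕ → Fin d), ℝ)) (x : ℕ → Fin d), γ x * (transfer p f x - f x) =
      gammaV V lam x *
        ∑ a : Fin d, Real.exp (BV A V lam F (cons a x)) * (f (cons a x) - f x) := by
    intro f x
    simp only [mul_sub, Finset.sum_sub_distrib, ← Finset.sum_mul, hsum, transfer_apply]
    simp [γ, p]
  simpa only [hgen] using hmain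
end
end

section
/- Existence of the free energy Q(V): let θ ∈ (0,1), A : X → ℝ a normalized Lipschitz potential, μ_A a Borel probability on X with ∫ 𝓛_A f dμ_A = ∫ f dμ_A for all f ∈ C(X,ℝ), and V : X → ℝ continuous. Then there exists q ∈ ℝ such that (1/T)·log ∫ e^{T(𝓛_A − I + M_V)}(1)(x) dμ_A(x) converges to q as T → ∞ (here 1 denotes the constant function 1). -/
/-!
Up to a scalar factor `e^{-cT}` the generator may be replaced by `B = 𝓛_A + M_W` with `W ≥ 0`
continuous, so that `B` is a positive operator. Write `u_T = e^{TB} 1`.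

* By positivity `T ↦ log ‖u_T‖` is subadditive, so `log ‖u_n‖ / n` converges to some `r ≥ 0`
  (Fekete's lemma), and clearly `∫ u_T ≤ ‖u_T‖`.
* For the matching lower bound fix `ε > 0` and choose `k` such that `W` varies by at most `ε` on
  cylinders of length `k`. An induction on `n` (`pow_distortion`) compares the iterates of `B` at
  `x` with those of `B + ε` at `z` whenever `x` and `z` share their first `k` letters; the
  Lipschitz potential contributes only the bounded factor coming from the geometric series
  `∑ θ^j`. Summing the exponential series gives `u_T(x) ≤ e^{C + εT} u_T(z)`.
* From any point `y`, `k` applications of `B` reach a point `z` sharing `k` letters with `x`, with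
  weight bounded below (`exists_reach`). Hence `u_{T+1}(y) ≥ c_ε e^{-εT} ‖u_T‖` for all `y`, and
  integrating in `y` shows that `∫ u_{T+1}` and `‖u_T‖` have the same exponential growth rate.
-/

open MeasureTheory Filter

noncomputable section

namespace FreeEnergy

/-! ### The exponential of a bounded operator on `C(X, ℝ)` -/

section Banach

variable {E : Type*} [NormedAddCommGroup E] [NormedSpace ℝ E] [CompleteSpace E]

/-- The exponential series of a bounded operator on a Banach space, applied to a vector. The
semigroup identities are proved at this generality, where the operators form a normed algebra
for the given topology, and are then read off for `opExp`. -/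
def expSum (B : E →L[ℝ] E) (f : E) : E := ∑' n : ℕ, (Nat.factorial n : ℝ)⁻¹ • (B ^ n) f

theorem expSum_hasSum' (B : E →L[ℝ] E) (f : E) :
    HasSum (fun n : ℕ => (Nat.factorial n : ℝ)⁻¹ • (B ^ n) f) (NormedSpace.exp B f) :=
  (NormedSpace.exp_series_hasSum_exp' (𝕂 := ℝ) B).mapL (ContinuousLinearMap.apply ℝ E f)

theorem expSum_eq (B : E →L[ℝ] E) (f : E) : expSum B f = NormedSpace.exp B f :=
  (expSum_hasSum' B f).tsum_eq

theorem expSum_hasSum (B : E →L[ℝ] E) (T : ℝ) (f : E) :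
    HasSum (fun n : ℕ => ((Nat.factorial n : ℝ)⁻¹ * T ^ n) • (B ^ n) f) (expSum (T • B) f) := by
  have h := expSum_hasSum' (T • B) f
  rw [← expSum_eq] at h
  simpa only [smul_pow, ContinuousLinearMap.smul_apply, smul_smul] using h

theorem expSum_add (B : E →L[ℝ] E) (S T : ℝ) (f : E) :
    expSum ((S + T) • B) f = expSum (S • B) (expSum (T • B) f) := by
  let : NormedAlgebra ℚ (E →L[ℝ] E) := NormedAlgebra.restrictScalars ℚ ℝ _
  simp only [expSum_eq]
  rw [add_smul, NormedSpace.exp_add_of_commute (((Commute.refl B).smul_left S).smul_right T)]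
  rfl

theorem expSum_shift (B : E →L[ℝ] E) (c T : ℝ) (f : E) :
    expSum (T • (B + c • (1 : E →L[ℝ] E))) f = Real.exp (T * c) • expSum (T • B) f := by
  let : NormedAlgebra ℚ (E →L[ℝ] E) := NormedAlgebra.restrictScalars ℚ ℝ _
  simp only [expSum_eq]
  have hc : Commute ((T * c) • (1 : E →L[ℝ] E)) (T • B) :=
    ((Commute.one_left B).smul_left (T * c)).smul_right T
  have h1 : NormedSpace.exp ((T * c) • (1 : E →L[ℝ] E))
      = Real.exp (T * c) • (1 : E →L[ℝ] E) := by
    have := NormedSpace.algebraMap_exp_comm (𝕂 := ℝ) (𝔸 := E →L[ℝ] E) (T * c)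
    rw [Algebra.algebraMap_eq_smul_one, Algebra.algebraMap_eq_smul_one,
      ← Real.exp_eq_exp_ℝ] at this
    exact this.symm
  rw [smul_add, smul_smul, add_comm, NormedSpace.exp_add_of_commute hc, h1]
  simp

theorem expSum_smul (B : E →L[ℝ] E) (c : ℝ) (f : E) : expSum B (c • f) = c • expSum B f := by
  rw [expSum_eq, expSum_eq, map_smul]

end Banach

section OpExp

variable {X : Type*} [TopologicalSpace X] [CompactSpace X]

theorem opExp_hasSum_apply (B : C(X, ℝ) →L[ℝ] C(X, ℝ)) (T : ℝ) (f : C(X, ℝ)) (x : X) :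
    HasSum (fun n : ℕ => (Nat.factorial n : ℝ)⁻¹ * T ^ n * (B ^ n) f x) (opExp (T • B) f x) :=
  (expSum_hasSum B T f).mapL (ContinuousMap.evalCLM ℝ x)

theorem opExp_add (B : C(X, ℝ) →L[ℝ] C(X, ℝ)) (S T : ℝ) (f : C(X, ℝ)) :
    opExp ((S + T) • B) f = opExp (S • B) (opExp (T • B) f) :=
  expSum_add B S T f

/-- Adding a scalar to the generator multiplies the semigroup by a scalar exponential. -/
theorem opExp_shift (B : C(X, ℝ) →L[ℝ] C(X, ℝ)) (c T : ℝ) (f : C(X, ℝ)) :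
    opExp (T • (B + c • (1 : C(X, ℝ) →L[ℝ] C(X, ℝ)))) f
      = Real.exp (T * c) • opExp (T • B) f :=
  expSum_shift B c T f

theorem opExp_smul (B : C(X, ℝ) →L[ℝ] C(X, ℝ)) (c : ℝ) (f : C(X, ℝ)) :
    opExp B (c • f) = c • opExp B f :=
  expSum_smul B c f

/-! ### Exponentials of positive operators -/

/-- A positive operator: it preserves the cone of pointwise nonnegative functions. -/
def Pos (B : C(X, ℝ) →L[ℝ] C(X, ℝ)) : Prop :=
  ∀ f : C(X, ℝ), (∀ x, 0 ≤ f x) → ∀ x, 0 ≤ B f x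

variable {B : C(X, ℝ) →L[ℝ] C(X, ℝ)}

theorem Pos.pow (hB : Pos B) (n : ℕ) {f : C(X, ℝ)} (hf : ∀ x, 0 ≤ f x) :
    ∀ x, 0 ≤ (B ^ n) f x := by
  induction n with
  | zero => simpa using hf
  | succ n ih =>
    rw [pow_succ']
    exact hB _ ih

theorem Pos.term_le (hB : Pos B) {T : ℝ} (hT : 0 ≤ T) {f : C(X, ℝ)} (hf : ∀ x, 0 ≤ f x)
    (n : ℕ) (x : X) :
    (Nat.factorial n : ℝ)⁻¹ * T ^ n * (B ^ n) f x ≤ opExp (T • B) f x :=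
  le_hasSum (opExp_hasSum_apply B T f x) n fun m _ =>
    mul_nonneg (by positivity) (hB.pow m hf x)

theorem Pos.le_opExp (hB : Pos B) {T : ℝ} (hT : 0 ≤ T) {f : C(X, ℝ)} (hf : ∀ x, 0 ≤ f x)
    (x : X) : f x ≤ opExp (T • B) f x := by
  simpa using hB.term_le hT hf 0 x

theorem Pos.opExp_mono_fun (hB : Pos B) {T : ℝ} (hT : 0 ≤ T) {f g : C(X, ℝ)}
    (hfg : ∀ x, f x ≤ g x) (x : X) : opExp (T • B) f x ≤ opExp (T • B) g x := by
  refine hasSum_le (fun n => ?_) (opExp_hasSum_apply B T f x) (opExp_hasSum_apply B T g x)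
  refine mul_le_mul_of_nonneg_left ?_ (by positivity)
  have := hB.pow n (f := g - f) (fun x => by simpa using hfg x) x
  simpa using this

theorem Pos.opExp_mono_time (hB : Pos B) {S T : ℝ} (hS : 0 ≤ S) (hST : S ≤ T) {f : C(X, ℝ)}
    (hf : ∀ x, 0 ≤ f x) (x : X) : opExp (S • B) f x ≤ opExp (T • B) f x := by
  refine hasSum_le (fun n => ?_) (opExp_hasSum_apply B S f x) (opExp_hasSum_apply B T f x)
  have := hB.pow n hf x
  gcongr

theorem Pos.one_le (hB : Pos B) {T : ℝ} (hT : 0 ≤ T) (x : X) :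
    1 ≤ opExp (T • B) (1 : C(X, ℝ)) x := by
  simpa using hB.le_opExp hT (f := 1) (by simp) x

theorem Pos.norm_mul (hB : Pos B) {S T : ℝ} (hS : 0 ≤ S) (hT : 0 ≤ T) :
    ‖opExp ((S + T) • B) (1 : C(X, ℝ))‖
      ≤ ‖opExp (S • B) (1 : C(X, ℝ))‖ * ‖opExp (T • B) (1 : C(X, ℝ))‖ := by
  rw [ContinuousMap.norm_le _ (by positivity)]
  intro x
  rw [Real.norm_of_nonneg (zero_le_one.trans (hB.one_le (by positivity) x)), opExp_add]
  set u := opExp (T • B) (1 : C(X, ℝ))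
  calc opExp (S • B) u x ≤ opExp (S • B) (‖u‖ • (1 : C(X, ℝ))) x :=
        hB.opExp_mono_fun hS (fun x => by
          simpa using (le_abs_self _).trans (u.norm_coe_le_norm x)) x
    _ = opExp (S • B) (1 : C(X, ℝ)) x * ‖u‖ := by
        rw [opExp_smul]
        simp [mul_comm]
    _ ≤ _ := by
        gcongr
        exact (Real.le_norm_self _).trans (ContinuousMap.norm_coe_le_norm _ x)

end OpExp

/-! ### Cylinders and the metric `d_θ` -/

section Bernoulli

variable {d : ℕ}

/-- The sequences `x` and `y` have the same first `m` letters. -/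
def Agree (m : ℕ) (x y : ℕ → Fin d) : Prop := ∀ i < m, x i = y i

theorem Agree.cons {m : ℕ} {x y : ℕ → Fin d} (h : Agree m x y) (a : Fin d) :
    Agree (m + 1) (cons a x) (cons a y) := by
  rintro (_ | i) hi
  · rfl
  · exact h i (by omega)

theorem distTheta_le {θ : ℝ} (h0 : 0 < θ) (h1 : θ < 1) {m : ℕ} {x y : ℕ → Fin d}
    (h : Agree m x y) : distTheta θ x y ≤ θ ^ m := by
  unfold distTheta
  split_ifs with hxy
  · positivity
  · refine pow_le_pow_of_le_one h0.le h1.le ?_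
    obtain ⟨n, hn⟩ := Function.ne_iff.mp hxy
    refine le_csInf ⟨n, hn⟩ fun b hb => ?_
    by_contra! hlt
    exact hb (h b hlt)

theorem distTheta_nonneg {θ : ℝ} (h0 : 0 < θ) (x y : ℕ → Fin d) : 0 ≤ distTheta θ x y := by
  unfold distTheta
  split_ifs <;> positivity

theorem potential_le {θ CA : ℝ} (h0 : 0 < θ) (h1 : θ < 1) {A : (ℕ → Fin d) → ℝ}
    (hA : ∀ x y, |A x - A y| ≤ CA * distTheta θ x y) {m : ℕ} {x y : ℕ → Fin d}
    (h : Agree m x y) : A x ≤ A y + |CA| * θ ^ m := by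
  have h2 := (le_abs_self _).trans (hA x y)
  have h3 : CA * distTheta θ x y ≤ |CA| * θ ^ m :=
    mul_le_mul (le_abs_self _) (distTheta_le h0 h1 h) (distTheta_nonneg h0 x y) (abs_nonneg _)
  linarith

theorem exists_cylinder {W : (ℕ → Fin d) → ℝ} (hW : Continuous W) {ε : ℝ} (hε : 0 < ε) :
    ∃ k, ∀ x y, Agree k x y → W x ≤ W y + ε := by
  let : MetricSpace (ℕ → Fin d) := PiNat.metricSpace
  have hu : UniformContinuous W := CompactSpace.uniformContinuous_of_continuous hW
  obtain ⟨δ, hδ, h⟩ := Metric.uniformContinuous_iff.mp hu ε hε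
  obtain ⟨k, hk⟩ := exists_pow_lt_of_lt_one hδ (by norm_num : (1 / 2 : ℝ) < 1)
  refine ⟨k, fun x y hxy => ?_⟩
  have h1 : dist x y ≤ (1 / 2) ^ k := by
    rw [← PiNat.mem_cylinder_iff_dist_le, PiNat.mem_cylinder_iff]
    exact hxy
  have h2 := h (h1.trans_lt hk)
  rw [Real.dist_eq, abs_lt] at h2
  linarith [h2.2]

/-! ### The operator `𝓛_A + M_W` -/

variable {A W : (ℕ → Fin d) → ℝ} {B : C((ℕ → Fin d), ℝ) →L[ℝ] C((ℕ → Fin d), ℝ)}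

theorem pos_of_form (hW0 : ∀ x, 0 ≤ W x)
    (hB : ∀ (f : C((ℕ → Fin d), ℝ)) x, B f x = ruelleSum A f x + W x * f x) : Pos B := by
  intro f hf x
  rw [hB, ruelleSum]
  exact add_nonneg (Finset.sum_nonneg fun a _ => mul_nonneg (Real.exp_nonneg _) (hf _))
    (mul_nonneg (hW0 x) (hf x))

/-- Bounded distortion of the iterates. The constant `|CA| θ / (1 - θ)` is the fixed point of
`C ↦ θ (C + |CA|)`, the effect of prepending one letter. -/
theorem pow_distortion {θ CA : ℝ} (h0 : 0 < θ) (h1 : θ < 1)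
    (hA : ∀ x y, |A x - A y| ≤ CA * distTheta θ x y) (hW0 : ∀ x, 0 ≤ W x)
    (hB : ∀ (f : C((ℕ → Fin d), ℝ)) x, B f x = ruelleSum A f x + W x * f x)
    {ε : ℝ} {k : ℕ} (hk : ∀ x y, Agree k x y → W x ≤ W y + ε) (n : ℕ) :
    ∀ m, k ≤ m → ∀ x y, Agree m x y →
      (B ^ n) 1 x ≤ Real.exp (|CA| * θ / (1 - θ) * θ ^ m) *
        ((B + ε • (1 : C((ℕ → Fin d), ℝ) →L[ℝ] C((ℕ → Fin d), ℝ))) ^ n) 1 y := by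
  have hP := pos_of_form hW0 hB
  set C := |CA| * θ / (1 - θ) with hC
  have h1' : 0 < 1 - θ := by linarith
  have hC0 : 0 ≤ C := by positivity
  have hCeq : |CA| * θ + C * θ = C := by
    rw [hC]
    field_simp
    ring
  induction n with
  | zero =>
    intro m _ x y _
    simpa using mul_nonneg hC0 (pow_nonneg h0.le m)
  | succ n ih =>
    intro m hm x y hxy
    set g := ((B + ε • (1 : C((ℕ → Fin d), ℝ) →L[ℝ] C((ℕ → Fin d), ℝ))) ^ n) 1 with hg
    have hWε : W x ≤ W y + ε := hk x y fun i hi => hxy i (hi.trans_le hm)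
    have hf0 : ∀ x, 0 ≤ (B ^ n) 1 x := hP.pow n (by simp)
    have hL : ruelleSum A ((B ^ n) 1) x ≤ Real.exp (C * θ ^ m) * ruelleSum A g y := by
      unfold ruelleSum
      rw [Finset.mul_sum]
      refine Finset.sum_le_sum fun a _ => ?_
      have e1 := potential_le h0 h1 hA (hxy.cons a)
      have e2 := ih (m + 1) (by omega) _ _ (hxy.cons a)
      calc _ ≤ Real.exp (A (cons a y) + |CA| * θ ^ (m + 1)) *
              (Real.exp (C * θ ^ (m + 1)) * g (cons a y)) :=
            mul_le_mul (Real.exp_le_exp.mpr e1) e2 (hf0 _) (Real.exp_nonneg _)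
        _ = Real.exp (A (cons a y) + (|CA| * θ + C * θ) * θ ^ m) * g (cons a y) := by
            rw [← mul_assoc, ← Real.exp_add]
            ring_nf
        _ = _ := by
            rw [hCeq, Real.exp_add]
            ring
    have hM : W x * (B ^ n) 1 x ≤ (W y + ε) * (Real.exp (C * θ ^ m) * g y) :=
      mul_le_mul hWε (ih m hm x y hxy) (hf0 _) ((hW0 x).trans hWε)
    rw [pow_succ', pow_succ']
    simp only [mul_apply_eq_comp, ← hg]
    have hr : (B + ε • (1 : C((ℕ → Fin d), ℝ) →L[ℝ] C((ℕ → Fin d), ℝ))) g y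
        = ruelleSum A g y + (W y + ε) * g y := by
      simp [hB]
      ring
    rw [hr, hB]
    linarith

theorem opExp_distortion {θ CA : ℝ} (h0 : 0 < θ) (h1 : θ < 1)
    (hA : ∀ x y, |A x - A y| ≤ CA * distTheta θ x y) (hW0 : ∀ x, 0 ≤ W x)
    (hB : ∀ (f : C((ℕ → Fin d), ℝ)) x, B f x = ruelleSum A f x + W x * f x)
    {ε : ℝ} {k : ℕ} (hk : ∀ x y, Agree k x y → W x ≤ W y + ε) {T : ℝ} (hT : 0 ≤ T)
    {x y : ℕ → Fin d} (hxy : Agree k x y) :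
    opExp (T • B) 1 x ≤
      Real.exp (|CA| * θ / (1 - θ) * θ ^ k) * (Real.exp (T * ε) * opExp (T • B) 1 y) := by
  have h2 := opExp_hasSum_apply (B + ε • (1 : C((ℕ → Fin d), ℝ) →L[ℝ] C((ℕ → Fin d), ℝ))) T 1 y
  rw [opExp_shift] at h2
  refine hasSum_le (fun n => ?_) (opExp_hasSum_apply B T 1 x)
    (h2.mul_left (Real.exp (|CA| * θ / (1 - θ) * θ ^ k)))
  have := pow_distortion h0 h1 hA hW0 hB hk n k le_rfl x y hxy
  rw [mul_left_comm]
  gcongr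

/-- From every `y`, `k` applications of `B` see a preimage of `y` lying in the cylinder of
length `k` around `x`, with weight at least `e^{ka}` where `a` is a lower bound for `A`. -/
theorem exists_reach (hW0 : ∀ x, 0 ≤ W x)
    (hB : ∀ (f : C((ℕ → Fin d), ℝ)) x, B f x = ruelleSum A f x + W x * f x)
    {a : ℝ} (ha : ∀ x, a ≤ A x) (y : ℕ → Fin d) (k : ℕ) :
    ∀ x : ℕ → Fin d, ∃ z, Agree k x z ∧ ∀ f : C((ℕ → Fin d), ℝ), (∀ x, 0 ≤ f x) →
      Real.exp a ^ k * f z ≤ (B ^ k) f y := by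
  induction k with
  | zero =>
    intro x
    exact ⟨y, fun i hi => absurd hi (Nat.not_lt_zero i), fun f _ => by simp⟩
  | succ k ih =>
    intro x
    obtain ⟨z, hz, hzf⟩ := ih (shift x)
    refine ⟨cons (x 0) z, ?_, fun f hf => ?_⟩
    · rintro (_ | i) hi
      · rfl
      · exact hz i (by omega)
    · have h1 := hzf (B f) (pos_of_form hW0 hB f hf)
      have h2 : Real.exp a * f (cons (x 0) z) ≤ B f z := by
        rw [hB, ruelleSum]
        have h3 : Real.exp (A (cons (x 0) z)) * f (cons (x 0) z) ≤
            ∑ b, Real.exp (A (cons b z)) * f (cons b z) :=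
          Finset.single_le_sum (f := fun b => Real.exp (A (cons b z)) * f (cons b z))
            (fun b _ => mul_nonneg (Real.exp_nonneg _) (hf _)) (Finset.mem_univ (x 0))
        have h4 : Real.exp a * f (cons (x 0) z) ≤
            Real.exp (A (cons (x 0) z)) * f (cons (x 0) z) :=
          mul_le_mul_of_nonneg_right (Real.exp_le_exp.mpr (ha _)) (hf _)
        linarith [mul_nonneg (hW0 z) (hf z)]
      calc Real.exp a ^ (k + 1) * f (cons (x 0) z)
          = Real.exp a ^ k * (Real.exp a * f (cons (x 0) z)) := by ring
        _ ≤ Real.exp a ^ k * B f z := by gcongr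
        _ ≤ (B ^ k) (B f) y := h1
        _ = (B ^ (k + 1)) f y := by rw [pow_succ]; rfl

/-- Subexponential Harnack inequality: after one extra unit of time, the semigroup applied to `1`
is at every point comparable to its supremum. -/
theorem harnack {θ CA : ℝ} (h0 : 0 < θ) (h1 : θ < 1)
    (hA : ∀ x y, |A x - A y| ≤ CA * distTheta θ x y) (hW0 : ∀ x, 0 ≤ W x) (hW : Continuous W)
    (hB : ∀ (f : C((ℕ → Fin d), ℝ)) x, B f x = ruelleSum A f x + W x * f x)
    {ε : ℝ} (hε : 0 < ε) :
    ∃ K > 0, ∀ T : ℝ, 0 ≤ T → ∀ x y,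
      opExp (T • B) 1 x ≤ K * Real.exp (T * ε) * opExp ((T + 1) • B) 1 y := by
  have hP := pos_of_form hW0 hB
  obtain ⟨k, hk⟩ := exists_cylinder hW hε
  rcases isEmpty_or_nonempty (ℕ → Fin d) with hX | ⟨⟨x0⟩⟩
  · exact ⟨1, one_pos, fun T _ x => (hX.false x).elim⟩
  have ha : ∀ x, A x0 - |CA| ≤ A x := fun x => by
    have := potential_le h0 h1 hA (m := 0) (x := x0) (y := x)
      (fun i hi => absurd hi (Nat.not_lt_zero i))
    simp at this
    linarith
  set D := Real.exp (|CA| * θ / (1 - θ) * θ ^ k)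
  set δ := Real.exp (A x0 - |CA|) with hδ
  have hδ0 : 0 < δ := Real.exp_pos _
  refine ⟨D * (Nat.factorial k / δ ^ k), by positivity, fun T hT x y => ?_⟩
  obtain ⟨z, hz, hzf⟩ := exists_reach hW0 hB ha y k x
  have hu0 : ∀ x, 0 ≤ opExp (T • B) 1 x := fun x => zero_le_one.trans (hP.one_le hT x)
  have e1 := opExp_distortion h0 h1 hA hW0 hB hk hT hz
  have e2 := hzf (opExp (T • B) 1) hu0
  have e3 := hP.term_le zero_le_one hu0 k y
  rw [← opExp_add, add_comm 1 T, one_pow, mul_one] at e3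
  have e4 : opExp (T • B) 1 z ≤ (Nat.factorial k / δ ^ k) * opExp ((T + 1) • B) 1 y := by
    have hk0 : (0 : ℝ) < Nat.factorial k := by positivity
    rw [inv_mul_le_iff₀ hk0] at e3
    rw [div_mul_eq_mul_div, le_div_iff₀ (by positivity), mul_comm]
    exact e2.trans e3
  calc _ ≤ D * (Real.exp (T * ε) * opExp (T • B) 1 z) := e1
    _ ≤ D * (Real.exp (T * ε) * ((Nat.factorial k / δ ^ k) * opExp ((T + 1) • B) 1 y)) := by
        gcongr
    _ = _ := by ring

/-! ### Convergence of the growth rate -/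

/-- The growth rate exists for generators `𝓛_A + M_W` with `W ≥ 0`. -/
theorem tendsto_of_form [Nonempty (ℕ → Fin d)] {θ CA : ℝ} (h0 : 0 < θ) (h1 : θ < 1)
    (hA : ∀ x y, |A x - A y| ≤ CA * distTheta θ x y) (hW0 : ∀ x, 0 ≤ W x) (hW : Continuous W)
    (hB : ∀ (f : C((ℕ → Fin d), ℝ)) x, B f x = ruelleSum A f x + W x * f x)
    (μ : Measure (ℕ → Fin d)) [IsProbabilityMeasure μ] :
    (∀ T : ℝ, 0 ≤ T → 1 ≤ ∫ x, opExp (T • B) 1 x ∂μ) ∧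
    ∃ r : ℝ, Tendsto (fun T : ℝ => (1 / T) * Real.log (∫ x, opExp (T • B) 1 x ∂μ))
      atTop (nhds r) := by
  have hP := pos_of_form hW0 hB
  set a : ℝ → ℝ := fun T => ∫ x, opExp (T • B) 1 x ∂μ with ha
  set s : ℝ → ℝ := fun T => ‖opExp (T • B) (1 : C((ℕ → Fin d), ℝ))‖ with hs
  have hint : ∀ f : C((ℕ → Fin d), ℝ), Integrable f μ := fun f =>
    f.continuous.integrable_of_hasCompactSupport (HasCompactSupport.of_compactSpace _)
  have hle : ∀ T x, opExp (T • B) 1 x ≤ s T := fun T x =>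
    (Real.le_norm_self _).trans (ContinuousMap.norm_coe_le_norm _ x)
  have ha1 : ∀ T : ℝ, 0 ≤ T → 1 ≤ a T := fun T hT => by
    simpa using integral_mono (integrable_const (1 : ℝ)) (hint _) (hP.one_le hT)
  refine ⟨ha1, ?_⟩
  have has : ∀ T : ℝ, a T ≤ s T := fun T => by
    simpa using integral_mono (hint _) (integrable_const (s T)) (hle T)
  have hs1 : ∀ T : ℝ, 0 ≤ T → 1 ≤ s T := fun T hT => (ha1 T hT).trans (has T)
  have hamono : ∀ S T : ℝ, 0 ≤ S → S ≤ T → a S ≤ a T := fun S T hS hST =>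
    integral_mono (hint _) (hint _) fun x => hP.opExp_mono_time hS hST (by simp) x
  have hsub : Subadditive fun n : ℕ => Real.log (s n) := fun m n => by
    have hm := hs1 m m.cast_nonneg
    have hn := hs1 n n.cast_nonneg
    rw [← Real.log_mul (by positivity) (by positivity)]
    refine Real.log_le_log (zero_lt_one.trans_le (hs1 _ (by positivity))) ?_
    push_cast
    exact hP.norm_mul m.cast_nonneg n.cast_nonneg
  have hbdd : BddBelow (Set.range fun n : ℕ => Real.log (s n) / n) := ⟨0, by
    rintro _ ⟨n, rfl⟩
    exact div_nonneg (Real.log_nonneg (hs1 n n.cast_nonneg)) n.cast_nonneg⟩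
  have hlim := hsub.tendsto_lim hbdd
  set r := hsub.lim
  have hr0 : 0 ≤ r := ge_of_tendsto' hlim fun n =>
    div_nonneg (Real.log_nonneg (hs1 n n.cast_nonneg)) n.cast_nonneg
  refine ⟨r, Metric.tendsto_nhds.mpr fun η hη => ?_⟩
  obtain ⟨ε, hε, hεη⟩ : ∃ ε > 0, ε * 3 = η := ⟨η / 3, by positivity, by ring⟩
  obtain ⟨K, hK, hKb⟩ := harnack h0 h1 hA hW0 hW hB hε
  have hsK : ∀ T : ℝ, 0 ≤ T → s T ≤ K * Real.exp (T * ε) * a (T + 1) := fun T hT => by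
    have hc : 0 ≤ K * Real.exp (T * ε) * a (T + 1) := by
      have := ha1 (T + 1) (by positivity)
      positivity
    refine (ContinuousMap.norm_le _ hc).mpr fun x => ?_
    rw [Real.norm_of_nonneg (zero_le_one.trans (hP.one_le hT x))]
    have := integral_mono (integrable_const (opExp (T • B) 1 x))
      ((hint (opExp ((T + 1) • B) 1)).const_mul (K * Real.exp (T * ε))) (hKb T hT x)
    rw [integral_const_mul] at this
    simpa using this
  obtain ⟨N, hN⟩ := eventually_atTop.mp ((Metric.tendsto_nhds.mp hlim) ε hε)
  filter_upwards [eventually_ge_atTop (2 : ℝ), eventually_ge_atTop (N : ℝ),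
    eventually_gt_atTop ((r + ε) / ε), eventually_gt_atTop ((2 * r + |Real.log K|) / ε)]
    with T hT2 hTN hTr hTK
  have hTpos : 0 < T := by linarith
  rw [div_lt_iff₀ hε] at hTr hTK
  -- `n + 1 = ⌊T⌋`, so that `a T` is bracketed by `s n` and `s (n + 2)`.
  obtain ⟨n, hn⟩ : ∃ n : ℕ, n + 1 = ⌊T⌋₊ :=
    ⟨⌊T⌋₊ - 1, Nat.sub_add_cancel (Nat.le_floor (by push_cast; linarith))⟩
  have hn1 : (n : ℝ) + 1 ≤ T := by
    have := Nat.floor_le hTpos.le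
    rw [← hn] at this
    exact_mod_cast this
  have hn2 : T < (n : ℝ) + 2 := by
    have := Nat.lt_floor_add_one T
    rw [← hn] at this
    push_cast at this
    linarith
  have haT := ha1 T hTpos.le
  have hup : Real.log (a T) ≤ (r + ε) * (T + 1) := by
    have e1 : a T ≤ s ((n + 2 : ℕ) : ℝ) :=
      (hamono T _ hTpos.le (by push_cast; linarith)).trans (has _)
    have e2 := hN (n + 2) (by
      have : (N : ℝ) < ((n + 2 : ℕ) : ℝ) := by push_cast; linarith
      exact_mod_cast this.le)
    rw [Real.dist_eq, abs_lt] at e2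
    have e3 : Real.log (s ((n + 2 : ℕ) : ℝ)) / ((n + 2 : ℕ) : ℝ) < r + ε := by linarith [e2.2]
    rw [div_lt_iff₀ (by positivity)] at e3
    have e4 := Real.log_le_log (by linarith) e1
    have e5 : (r + ε) * ((n + 2 : ℕ) : ℝ) ≤ (r + ε) * (T + 1) := by
      gcongr
      push_cast
      linarith
    linarith
  have hlow : r * (T - 2) ≤ |Real.log K| + T * ε + Real.log (a T) := by
    have e1 : s n ≤ K * Real.exp (n * ε) * a T := by
      refine (hsK n n.cast_nonneg).trans ?_
      gcongr
      exact hamono _ _ (by positivity) hn1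
    have e2 := Real.log_le_log (by linarith [hs1 n n.cast_nonneg]) e1
    rw [Real.log_mul (by positivity) (by positivity), Real.log_mul hK.ne' (by positivity),
      Real.log_exp] at e2
    have e3 : r * n ≤ Real.log (s n) := by
      rcases Nat.eq_zero_or_pos n with h | h
      · simpa [h] using Real.log_nonneg (hs1 0 le_rfl)
      · have := hsub.lim_le_div hbdd h.ne'
        rwa [le_div_iff₀ (by exact_mod_cast h)] at this
    have e4 : r * (T - 2) ≤ r * n := by
      gcongr
      linarith
    have e5 : (n : ℝ) * ε ≤ T * ε := by
      gcongr
      linarith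
    linarith [le_abs_self (Real.log K)]
  rw [Real.dist_eq]
  have hrw : 1 / T * Real.log (a T) - r = (Real.log (a T) - r * T) / T := by
    field_simp
  rw [hrw, abs_div, abs_of_pos hTpos, div_lt_iff₀ hTpos, ← hεη, abs_lt]
  have hεT : 0 < ε * T := by positivity
  constructor <;> nlinarith

end Bernoulli

end FreeEnergy

/-- **Existence of the free energy `Q(V)`.** -/
theorem stmt_15 (d : ℕ) (hd : 2 ≤ d) (θ : ℝ) (hθ0 : 0 < θ) (hθ1 : θ < 1)
    (A : (ℕ → Fin d) → ℝ)
    (CA : ℝ) (hALip : ∀ x y, |A x - A y| ≤ CA * distTheta θ x y)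
    (hAnorm : ∀ x, ∑ a : Fin d, Real.exp (A (cons a x)) = 1)
    (μA : Measure (ℕ → Fin d)) (hμAp : IsProbabilityMeasure μA)
    (hμAinv : ∀ f : C((ℕ → Fin d), ℝ), ∫ x, ruelleSum A f x ∂μA = ∫ x, f x ∂μA)
    (V : (ℕ → Fin d) → ℝ) (hV : Continuous V)
    (LA MV : C((ℕ → Fin d), ℝ) →L[ℝ] C((ℕ → Fin d), ℝ))
    (hLA : ∀ (f : C((ℕ → Fin d), ℝ)) (x), LA f x = ruelleSum A f x)
    (hMV : ∀ (f : C((ℕ → Fin d), ℝ)) (x), MV f x = V x * f x) :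
    ∃ q : ℝ, Tendsto (fun T : ℝ => (1 / T) * Real.log
        (∫ x, opExp (T • (LA - ContinuousLinearMap.id ℝ C((ℕ → Fin d), ℝ) + MV))
          (1 : C((ℕ → Fin d), ℝ)) x ∂μA))
      atTop (nhds q) := by
  have hne : Nonempty (ℕ → Fin d) := ⟨fun _ => ⟨0, by omega⟩⟩
  obtain ⟨c, hc⟩ : ∃ c : ℝ, ∀ x, 0 ≤ V x - 1 + c :=
    ⟨1 + ‖(⟨V, hV⟩ : C((ℕ → Fin d), ℝ))‖, fun x => by
      have h := ContinuousMap.norm_coe_le_norm (⟨V, hV⟩ : C((ℕ → Fin d), ℝ)) x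
      have h' := neg_abs_le (V x)
      simp only [ContinuousMap.coe_mk, Real.norm_eq_abs] at h
      linarith⟩
  set G := LA - ContinuousLinearMap.id ℝ C((ℕ → Fin d), ℝ) + MV with hG
  have hB : ∀ (f : C((ℕ → Fin d), ℝ)) x,
      (G + c • (1 : C((ℕ → Fin d), ℝ) →L[ℝ] C((ℕ → Fin d), ℝ))) f x
        = ruelleSum A f x + (V x - 1 + c) * f x := fun f x => by
    simp [hG, hLA, hMV]
    ring
  obtain ⟨h1, r, hr⟩ := FreeEnergy.tendsto_of_form hθ0 hθ1 hALip hc (by fun_prop) hB μA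
  refine ⟨r - c, (hr.sub_const c).congr' ?_⟩
  filter_upwards [eventually_gt_atTop (0 : ℝ)] with T hT
  have h2 := h1 T hT.le
  simp only [FreeEnergy.opExp_shift, ContinuousMap.smul_apply, smul_eq_mul,
    integral_const_mul] at h2 ⊢
  have h3 : ∫ x, opExp (T • G) (1 : C((ℕ → Fin d), ℝ)) x ∂μA ≠ 0 := by
    intro h
    rw [h] at h2
    norm_num at h2
  rw [Real.log_mul (Real.exp_pos _).ne' h3, Real.log_exp]
  field_simp
  ring
end
end

section
/- The free energy equals the Perron eigenvalue: let A : X → ℝ be a normalized Lipschitz potential, μ_A a Borel probability on X with ∫ 𝓛_A f dμ_A = ∫ f dμ_A for all f ∈ C(X,ℝ), V : X → ℝ Lipschitz, and suppose λ ∈ ℝ and F ∈ C(X,ℝ) with F > 0 satisfy 𝓛_A F = (1 − V + λ)·F pointwise. Then (1/T)·log ∫ e^{T(𝓛_A − I + M_V)}(1)(x) dμ_A(x) converges to λ as T → ∞. -/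
/-!
Write `B = 𝓛_A - I + M_V`. The eigenvalue equation says `B F = lam • F`, so
`e^{TB} F = e^{T lam} F` (`opExp_eigen`). The operator `B + c I` with `c = 1 + sup |V|` is positive,
hence so is `e^{TB} = e^{-cT} e^{T(B + cI)}` for `T ≥ 0` (`opExp_nonneg_of_add_smul`). Since `F` is
continuous and positive on a compact space, `F / M ≤ 1 ≤ F / m` with constants `0 < m ≤ M`, and
applying `e^{TB}` gives `e^{T lam} m / M ≤ e^{TB} 1 ≤ e^{T lam} M / m` pointwise. Integrating against
the probability measure, taking logarithms and dividing by `T` gives the limit `lam`.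
-/

open MeasureTheory Filter

noncomputable section

section BanachExponential

variable {E : Type*} [NormedAddCommGroup E] [NormedSpace ℝ E] [CompleteSpace E]

/-- `NormedSpace.exp` is handled over an abstract Banach space because its instances are not found
by unification when stated directly for operators on `C(X, ℝ)`. -/
lemma hasSum_exp_apply (B : E →L[ℝ] E) (f : E) :
    HasSum (fun n : ℕ => (Nat.factorial n : ℝ)⁻¹ • (B ^ n) f) (NormedSpace.exp B f) := by
  have h : HasSum (fun n : ℕ => (Nat.factorial n : ℝ)⁻¹ • B ^ n) (NormedSpace.exp B) :=
    NormedSpace.exp_series_hasSum_exp' (𝕂 := ℝ) B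
  have h' := h.mapL (ContinuousLinearMap.apply ℝ E f)
  simpa only [ContinuousLinearMap.apply_apply, smul_apply] using h'

lemma exp_apply_eigen (B : E →L[ℝ] E) (f : E) (r : ℝ) (h : B f = r • f) :
    NormedSpace.exp B f = Real.exp r • f := by
  have hpow : ∀ n : ℕ, (B ^ n) f = r ^ n • f := by
    intro n
    induction n with
    | zero => simp
    | succ n ih =>
      rw [pow_succ, mul_apply_eq_comp, h, map_smul, ih, smul_smul, pow_succ, mul_comm]
  have hs : HasSum (fun n : ℕ => (Nat.factorial n : ℝ)⁻¹ • r ^ n) (Real.exp r) := by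
    rw [Real.exp_eq_exp_ℝ]
    exact NormedSpace.exp_series_hasSum_exp' (𝕂 := ℝ) r
  refine (hasSum_exp_apply B f).unique ?_
  convert hs.smul_const f using 2 with n
  rw [hpow, smul_assoc]

lemma exp_apply_shift (B : E →L[ℝ] E) (r : ℝ) (f : E) :
    NormedSpace.exp B f
      = Real.exp (-r) • NormedSpace.exp (B + r • ContinuousLinearMap.id ℝ E) f := by
  set S : E →L[ℝ] E := (-r) • (1 : E →L[ℝ] E) with hS
  have hBS : B = (B + r • ContinuousLinearMap.id ℝ E) + S := by
    ext y
    simp [hS]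
  have hcomm : Commute (B + r • ContinuousLinearMap.id ℝ E) S :=
    (Commute.one_right _).smul_right _
  have hSf : NormedSpace.exp S f = Real.exp (-r) • f := exp_apply_eigen S f (-r) (by simp [hS])
  let _ : NormedAlgebra ℚ (E →L[ℝ] E) := NormedAlgebra.restrictScalars ℚ ℝ _
  conv_lhs => rw [hBS]
  rw [NormedSpace.exp_add_of_commute hcomm, mul_apply_eq_comp, hSf, map_smul]

end BanachExponential

section OperatorExponential

variable {X : Type*} [TopologicalSpace X] [CompactSpace X]

lemma hasSum_opExp (B : C(X, ℝ) →L[ℝ] C(X, ℝ)) (f : C(X, ℝ)) :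
    HasSum (fun n : ℕ => (Nat.factorial n : ℝ)⁻¹ • (B ^ n) f) (opExp B f) :=
  (hasSum_exp_apply B f).summable.hasSum

lemma opExp_sub (B : C(X, ℝ) →L[ℝ] C(X, ℝ)) (f g : C(X, ℝ)) :
    opExp B (f - g) = opExp B f - opExp B g :=
  (hasSum_exp_apply B (f - g)).tsum_eq.trans ((map_sub _ f g).trans
    (congrArg₂ (fun u v : C(X, ℝ) => u - v)
      (hasSum_exp_apply B f).tsum_eq.symm (hasSum_exp_apply B g).tsum_eq.symm))

lemma opExp_eigen (B : C(X, ℝ) →L[ℝ] C(X, ℝ)) (f : C(X, ℝ)) (r : ℝ) (h : B f = r • f) :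
    opExp B f = Real.exp r • f :=
  (hasSum_exp_apply B f).tsum_eq.trans (exp_apply_eigen B f r h)

lemma opExp_shift (B : C(X, ℝ) →L[ℝ] C(X, ℝ)) (r : ℝ) (f : C(X, ℝ)) :
    opExp B f = Real.exp (-r) • opExp (B + r • ContinuousLinearMap.id ℝ C(X, ℝ)) f :=
  (hasSum_exp_apply B f).tsum_eq.trans ((exp_apply_shift B r f).trans
    (congrArg (fun g : C(X, ℝ) => Real.exp (-r) • g) (hasSum_exp_apply _ f).tsum_eq.symm))

/-- The exponential of a positivity-preserving operator preserves positivity, term by term in the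
exponential series. -/
lemma opExp_nonneg_of_pos (P : C(X, ℝ) →L[ℝ] C(X, ℝ))
    (hP : ∀ f : C(X, ℝ), (∀ x, 0 ≤ f x) → ∀ x, 0 ≤ P f x)
    (f : C(X, ℝ)) (hf : ∀ x, 0 ≤ f x) (x : X) : 0 ≤ opExp P f x := by
  have hpow : ∀ n : ℕ, ∀ x, 0 ≤ (P ^ n) f x := by
    intro n
    induction n with
    | zero => exact hf
    | succ n ih =>
      rw [pow_succ', mul_apply_eq_comp]
      exact hP _ ih
  have hx := (ContinuousMap.evalCLM ℝ x).hasSum (hasSum_opExp P f)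
  exact hx.nonneg fun n => mul_nonneg (by positivity) (hpow n x)

/-- Only positivity up to a multiple of the identity is needed, because `e^{B + r I} = e^r e^B`. -/
lemma opExp_nonneg_of_add_smul (B : C(X, ℝ) →L[ℝ] C(X, ℝ)) (r : ℝ)
    (hP : ∀ f : C(X, ℝ), (∀ x, 0 ≤ f x) → ∀ x, 0 ≤ B f x + r * f x)
    (f : C(X, ℝ)) (hf : ∀ x, 0 ≤ f x) (x : X) : 0 ≤ opExp B f x := by
  rw [opExp_shift B r]
  exact mul_nonneg (Real.exp_pos _).le (opExp_nonneg_of_pos _ (fun g hg => hP g hg) f hf x)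

end OperatorExponential

/-- The logarithmic rate of a quantity squeezed between positive multiples of `e^{T lam}`. -/
lemma tendsto_log_div_of_exp_bounds (u : ℝ → ℝ) (lam a b : ℝ) (ha : 0 < a) (hb : 0 < b)
    (hlow : ∀ T, 0 ≤ T → a * Real.exp (T * lam) ≤ u T)
    (hup : ∀ T, 0 ≤ T → u T ≤ b * Real.exp (T * lam)) :
    Tendsto (fun T : ℝ => (1 / T) * Real.log (u T)) atTop (nhds lam) := by
  have hlim : ∀ c : ℝ, Tendsto (fun T : ℝ => (1 / T) * c + lam) atTop (nhds lam) := by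
    intro c
    have h := (tendsto_inv_atTop_zero (𝕜 := ℝ)).mul_const c |>.add_const lam
    simpa using h
  have hlog : ∀ c T : ℝ, 0 < c → 0 < T →
      (1 / T) * Real.log (c * Real.exp (T * lam)) = (1 / T) * Real.log c + lam := by
    intro c T hc hT
    rw [Real.log_mul hc.ne' (Real.exp_pos _).ne', Real.log_exp]
    field_simp
  refine tendsto_of_tendsto_of_tendsto_of_le_of_le' (hlim (Real.log a)) (hlim (Real.log b)) ?_ ?_
  · filter_upwards [eventually_gt_atTop (0 : ℝ)] with T hT
    rw [← hlog a T ha hT]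
    have := hlow T hT.le
    gcongr
  · filter_upwards [eventually_gt_atTop (0 : ℝ)] with T hT
    rw [← hlog b T hb hT]
    have h1 := hup T hT.le
    have h0 : 0 < u T := lt_of_lt_of_le (by positivity) (hlow T hT.le)
    gcongr

/-- **The free energy equals the Perron eigenvalue.** -/
theorem stmt_16 (d : ℕ) (hd : 2 ≤ d) (θ : ℝ) (hθ0 : 0 < θ) (hθ1 : θ < 1)
    (A : (ℕ → Fin d) → ℝ)
    (CA : ℝ) (hALip : ∀ x y, |A x - A y| ≤ CA * distTheta θ x y)
    (hAnorm : ∀ x, ∑ a : Fin d, Real.exp (A (cons a x)) = 1)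
    (μA : Measure (ℕ → Fin d)) (hμAp : IsProbabilityMeasure μA)
    (hμAinv : ∀ f : C((ℕ → Fin d), ℝ), ∫ x, ruelleSum A f x ∂μA = ∫ x, f x ∂μA)
    (V : (ℕ → Fin d) → ℝ)
    (CV : ℝ) (hVLip : ∀ x y, |V x - V y| ≤ CV * distTheta θ x y)
    (lam : ℝ) (F : C((ℕ → Fin d), ℝ)) (hFpos : ∀ x, 0 < F x)
    (heig : ∀ x, ruelleSum A F x = (1 - V x + lam) * F x)
    (LA MV : C((ℕ → Fin d), ℝ) →L[ℝ] C((ℕ → Fin d), ℝ))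
    (hLA : ∀ (f : C((ℕ → Fin d), ℝ)) (x), LA f x = ruelleSum A f x)
    (hMV : ∀ (f : C((ℕ → Fin d), ℝ)) (x), MV f x = V x * f x) :
    Tendsto (fun T : ℝ => (1 / T) * Real.log
        (∫ x, opExp (T • (LA - ContinuousLinearMap.id ℝ C((ℕ → Fin d), ℝ) + MV))
          (1 : C((ℕ → Fin d), ℝ)) x ∂μA))
      atTop (nhds lam) := by
  have hne : Nonempty (ℕ → Fin d) := ⟨fun _ => ⟨0, by omega⟩⟩
  obtain ⟨x₀, -, hx₀⟩ := isCompact_univ.exists_isMinOn Set.univ_nonempty F.continuous.continuousOn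
  obtain ⟨x₁, -, hx₁⟩ := isCompact_univ.exists_isMaxOn Set.univ_nonempty F.continuous.continuousOn
  have hm : ∀ x, F x₀ ≤ F x := fun x => hx₀ (Set.mem_univ x)
  have hM : ∀ x, F x ≤ F x₁ := fun x => hx₁ (Set.mem_univ x)
  have hm0 := hFpos x₀
  have hM0 := hFpos x₁
  set B := LA - ContinuousLinearMap.id ℝ C((ℕ → Fin d), ℝ) + MV with hB
  have hBapp : ∀ (f : C((ℕ → Fin d), ℝ)) x, B f x = ruelleSum A f x - f x + V x * f x := by
    intro f x
    simp [hB, hLA, hMV]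
  have hBF : B F = lam • F := by
    ext x
    rw [hBapp, heig, ContinuousMap.smul_apply, smul_eq_mul]
    ring
  have hVb : ∀ x, |V x| ≤ ‖MV 1‖ := by
    intro x
    have h := (MV 1).norm_coe_le_norm x
    simpa [hMV] using h
  have hpos : ∀ T : ℝ, 0 ≤ T → ∀ f : C((ℕ → Fin d), ℝ), (∀ x, 0 ≤ f x) →
      ∀ x, 0 ≤ opExp (T • B) f x := by
    intro T hT
    refine opExp_nonneg_of_add_smul (T • B) (T * (1 + ‖MV 1‖)) ?_
    intro f hf x
    have h1 : 0 ≤ ruelleSum A f x :=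
      Finset.sum_nonneg fun a _ => mul_nonneg (Real.exp_pos _).le (hf _)
    have h2 : 0 ≤ (V x + ‖MV 1‖) * f x :=
      mul_nonneg (by linarith [neg_abs_le (V x), hVb x]) (hf x)
    have h3 : (T • B) f x + T * (1 + ‖MV 1‖) * f x
        = T * (ruelleSum A f x + (V x + ‖MV 1‖) * f x) := by
      rw [smul_apply, ContinuousMap.smul_apply, hBapp, smul_eq_mul]
      ring
    rw [h3]
    exact mul_nonneg hT (add_nonneg h1 h2)
  have hmono : ∀ T : ℝ, 0 ≤ T → ∀ f g : C((ℕ → Fin d), ℝ), f ≤ g →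
      ∀ x, opExp (T • B) f x ≤ opExp (T • B) g x := by
    intro T hT f g hfg x
    have h := hpos T hT (g - f) (fun y => sub_nonneg.2 (hfg y)) x
    rw [opExp_sub] at h
    exact sub_nonneg.1 h
  have hscale : ∀ (T c : ℝ) x, opExp (T • B) (c • F) x = c * (Real.exp (T * lam) * F x) := by
    intro T c x
    have h : (T • B) (c • F) = (T * lam) • (c • F) := by
      rw [smul_apply, map_smul, hBF, smul_comm c lam, smul_smul]
    rw [opExp_eigen _ _ _ h]
    simp only [ContinuousMap.smul_apply, smul_eq_mul]
    ring
  have hint : ∀ f : C((ℕ → Fin d), ℝ), Integrable (fun x => f x) μA := fun f =>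
    f.continuous.integrable_of_hasCompactSupport (HasCompactSupport.of_compactSpace _)
  refine tendsto_log_div_of_exp_bounds _ lam (F x₀ / F x₁) (F x₁ / F x₀)
    (by positivity) (by positivity) ?_ ?_
  · intro T hT
    have hpt : ∀ x, F x₀ / F x₁ * Real.exp (T * lam) ≤ opExp (T • B) 1 x := by
      intro x
      have h := hmono T hT ((F x₁)⁻¹ • F) 1 (fun y => by
        simpa using inv_mul_le_one_of_le₀ (hM y) hM0.le) x
      rw [hscale] at h
      refine le_trans ?_ h
      have := hm x
      rw [div_eq_inv_mul, mul_assoc, mul_comm (F x₀)]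
      gcongr
    simpa using integral_mono (integrable_const (μ := μA) _) (hint _) hpt
  · intro T hT
    have hpt : ∀ x, opExp (T • B) 1 x ≤ F x₁ / F x₀ * Real.exp (T * lam) := by
      intro x
      have h := hmono T hT 1 ((F x₀)⁻¹ • F) (fun y => by
        have := hm y
        simpa [← div_eq_inv_mul, one_le_div hm0] using this) x
      rw [hscale] at h
      refine le_trans h ?_
      have := hM x
      rw [div_eq_inv_mul, mul_assoc, mul_comm (F x₁)]
      gcongr
    simpa using integral_mono (hint _) (integrable_const (μ := μA) _) hpt
end
end

section
/- The free energy is 1-Lipschitz in the potential: let A : X → ℝ be a normalized Lipschitz potential and μ_A a Borel probability on X with ∫ 𝓛_A f dμ_A = ∫ f dμ_A for all f ∈ C(X,ℝ). Let U, V : X → ℝ be continuous and let q_U, q_V ∈ ℝ be such that (1/T)·log ∫ e^{T(𝓛_A − I + M_U)}(1) dμ_A → q_U and (1/T)·log ∫ e^{T(𝓛_A − I + M_V)}(1) dμ_A → q_V as T → ∞. Then |q_V − q_U| ≤ sup_{x ∈ X} |V(x) − U(x)|. -/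
/-! Put `K = sup |V - U|`, so that `V ≤ U + K`. The operators `𝓛_A - I + M_W` (`W = U, V`) become
positive after adding a large constant `c`, and on nonnegative functions
`𝓛_A - I + M_V + c ≤ 𝓛_A - I + M_U + c + K`. Comparing the exponential series term by term
(`opExp_apply_le`) and factoring out the scalar shifts (`opExp_add_smul_id`) gives
`e^{T(𝓛_A - I + M_V)} 1 ≤ e^{TK} e^{T(𝓛_A - I + M_U)} 1`. Integrating, taking logarithms (the
integrals are positive by `le_opExp_apply`), dividing by `T` and letting `T → ∞` yields
`q_V ≤ q_U + K` (`freeEnergy_le`); exchanging `U` and `V` gives the other inequality. -/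

open MeasureTheory Filter

noncomputable section

/-! ### The operator exponential on `C(X, ℝ)` -/

section BanachSpace

variable {E : Type*} [NormedAddCommGroup E] [NormedSpace ℝ E] [CompleteSpace E]

lemma exp_add_smul_id (B : E →L[ℝ] E) (c : ℝ) :
    NormedSpace.exp (B + c • ContinuousLinearMap.id ℝ E)
      = Real.exp c • NormedSpace.exp B := by
  have hid : c • ContinuousLinearMap.id ℝ E = algebraMap ℝ (E →L[ℝ] E) c := by
    rw [Algebra.algebraMap_eq_smul_one]; rfl
  let : NormedAlgebra ℚ (E →L[ℝ] E) := NormedAlgebra.restrictScalars ℚ ℝ _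
  rw [hid, NormedSpace.exp_add_of_commute (Algebra.commutes c B).symm,
    ← NormedSpace.algebraMap_exp_comm, ← Real.exp_eq_exp_ℝ, Algebra.algebraMap_eq_smul_one,
    mul_smul_comm, mul_one]

lemma tsum_add_smul_id (B : E →L[ℝ] E) (c : ℝ) (f : E) :
    ∑' n : ℕ, (Nat.factorial n : ℝ)⁻¹ • ((B + c • ContinuousLinearMap.id ℝ E) ^ n) f
      = Real.exp c • ∑' n : ℕ, (Nat.factorial n : ℝ)⁻¹ • (B ^ n) f := by
  rw [(hasSum_exp_apply _ f).tsum_eq, (hasSum_exp_apply B f).tsum_eq, exp_add_smul_id]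
  rfl

end BanachSpace

section OperatorExponential

variable {X : Type*} [TopologicalSpace X] [CompactSpace X]

lemma hasSum_opExp_apply (B : C(X, ℝ) →L[ℝ] C(X, ℝ)) (f : C(X, ℝ)) (x : X) :
    HasSum (fun n : ℕ => (Nat.factorial n : ℝ)⁻¹ * (B ^ n) f x) (opExp B f x) := by
  have hs : Summable (fun n : ℕ => (Nat.factorial n : ℝ)⁻¹ • (B ^ n) f) :=
    (hasSum_exp_apply B f).summable
  simpa [opExp] using hs.hasSum.mapL (ContinuousMap.evalCLM ℝ x)

lemma opExp_add_smul_id (B : C(X, ℝ) →L[ℝ] C(X, ℝ)) (c : ℝ) (f : C(X, ℝ)) :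
    opExp (B + c • ContinuousLinearMap.id ℝ C(X, ℝ)) f = Real.exp c • opExp B f :=
  tsum_add_smul_id B c f

lemma pow_apply_nonneg {B : C(X, ℝ) →L[ℝ] C(X, ℝ)} (hB : ∀ f, 0 ≤ f → 0 ≤ B f)
    {f : C(X, ℝ)} (hf : 0 ≤ f) (n : ℕ) : 0 ≤ (B ^ n) f := by
  induction n with
  | zero => simpa using hf
  | succ n ih => rw [pow_succ']; exact hB _ ih

lemma pow_apply_le {B₁ B₂ : C(X, ℝ) →L[ℝ] C(X, ℝ)} (h₁ : ∀ f, 0 ≤ f → 0 ≤ B₁ f)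
    (h₁₂ : ∀ f, 0 ≤ f → B₁ f ≤ B₂ f) {f : C(X, ℝ)} (hf : 0 ≤ f) (n : ℕ) :
    (B₁ ^ n) f ≤ (B₂ ^ n) f := by
  induction n with
  | zero => simp
  | succ n ih =>
    rw [pow_succ', pow_succ']
    have h₂ : ∀ f, 0 ≤ f → 0 ≤ B₂ f := fun f hf => (h₁ f hf).trans (h₁₂ f hf)
    have hmono : B₁ ((B₁ ^ n) f) ≤ B₁ ((B₂ ^ n) f) := by
      have := h₁ _ (sub_nonneg.mpr ih)
      rwa [map_sub, sub_nonneg] at this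
    exact hmono.trans (h₁₂ _ (pow_apply_nonneg h₂ hf n))

/-- Domination of positive operators on the positive cone passes to their exponentials,
because it passes to every term of the exponential series. -/
lemma opExp_apply_le {B₁ B₂ : C(X, ℝ) →L[ℝ] C(X, ℝ)} (h₁ : ∀ f, 0 ≤ f → 0 ≤ B₁ f)
    (h₁₂ : ∀ f, 0 ≤ f → B₁ f ≤ B₂ f) {f : C(X, ℝ)} (hf : 0 ≤ f) (x : X) :
    opExp B₁ f x ≤ opExp B₂ f x :=
  hasSum_le (fun n => mul_le_mul_of_nonneg_left (pow_apply_le h₁ h₁₂ hf n x) (by positivity))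
    (hasSum_opExp_apply B₁ f x) (hasSum_opExp_apply B₂ f x)

/-- The zeroth term of the exponential series is a lower bound when all terms are nonnegative. -/
lemma le_opExp_apply {B : C(X, ℝ) →L[ℝ] C(X, ℝ)} (hB : ∀ f, 0 ≤ f → 0 ≤ B f)
    {f : C(X, ℝ)} (hf : 0 ≤ f) (x : X) : f x ≤ opExp B f x := by
  have h := le_hasSum (hasSum_opExp_apply B f x) 0
    (fun n _ => mul_nonneg (by positivity) (pow_apply_nonneg hB hf n x))
  simpa using h

end OperatorExponential

/-! ### Comparison of two potentials -/

/-- The one-sided estimate `q_V ≤ q_U + K` when `V ≤ U + K`, for the semigroups generated by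
`L - I + M_U` and `L - I + M_V` with `L` any positive operator. -/
lemma freeEnergy_le {X : Type*} [TopologicalSpace X] [CompactSpace X] [MeasurableSpace X]
    [OpensMeasurableSpace X]
    (μ : Measure X) [IsProbabilityMeasure μ] (L MU MV : C(X, ℝ) →L[ℝ] C(X, ℝ))
    (hL : ∀ f, 0 ≤ f → 0 ≤ L f) {U V : X → ℝ} (hU : Continuous U) (hV : Continuous V)
    (hMU : ∀ (f : C(X, ℝ)) (x), MU f x = U x * f x)
    (hMV : ∀ (f : C(X, ℝ)) (x), MV f x = V x * f x)
    {K : ℝ} (hK : ∀ x, V x ≤ U x + K) {qU qV : ℝ}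
    (hqU : Tendsto (fun T : ℝ => (1 / T) * Real.log
      (∫ x, opExp (T • (L - ContinuousLinearMap.id ℝ C(X, ℝ) + MU)) (1 : C(X, ℝ)) x ∂μ))
      atTop (nhds qU))
    (hqV : Tendsto (fun T : ℝ => (1 / T) * Real.log
      (∫ x, opExp (T • (L - ContinuousLinearMap.id ℝ C(X, ℝ) + MV)) (1 : C(X, ℝ)) x ∂μ))
      atTop (nhds qV)) :
    qV ≤ qU + K := by
  -- `c` makes `L - I + M_W + c` a positive operator for both `W = U` and `W = V`.
  obtain ⟨cU, hcU⟩ := (isCompact_range hU).bddBelow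
  obtain ⟨cV, hcV⟩ := (isCompact_range hV).bddBelow
  obtain ⟨c, hc₁, hc₂⟩ : ∃ c : ℝ, 1 - cU ≤ c ∧ 1 - cV ≤ c :=
    ⟨max (1 - cU) (1 - cV), le_max_left _ _, le_max_right _ _⟩
  have hcU' : ∀ x, 0 ≤ U x - 1 + c := fun x => by
    have := hcU (Set.mem_range_self x); linarith
  have hcV' : ∀ x, 0 ≤ V x - 1 + c := fun x => by
    have := hcV (Set.mem_range_self x); linarith
  have hpos : ∀ (W : X → ℝ) (M : C(X, ℝ) →L[ℝ] C(X, ℝ)), (∀ x, 0 ≤ W x - 1 + c) →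
      (∀ (f : C(X, ℝ)) (x), M f x = W x * f x) → ∀ T : ℝ, 0 < T → ∀ f, 0 ≤ f →
      0 ≤ (T • (L - ContinuousLinearMap.id ℝ C(X, ℝ) + M)
        + (T * c) • ContinuousLinearMap.id ℝ C(X, ℝ)) f := by
    intro W M hW hM T hT f hf x
    have h1 : 0 ≤ L f x := hL f hf x
    have h2 : 0 ≤ (W x - 1 + c) * f x := mul_nonneg (hW x) (hf x)
    have h3 := mul_nonneg hT.le (add_nonneg h1 h2)
    simp [hM]
    linarith
  have hint : ∀ g : C(X, ℝ), Integrable (fun x => g x) μ := fun g =>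
    g.continuous.integrable_of_hasCompactSupport (HasCompactSupport.of_compactSpace _)
  have hIpos : ∀ (W : X → ℝ) (M : C(X, ℝ) →L[ℝ] C(X, ℝ)), (∀ x, 0 ≤ W x - 1 + c) →
      (∀ (f : C(X, ℝ)) (x), M f x = W x * f x) → ∀ T : ℝ, 0 < T →
      0 < ∫ x, opExp (T • (L - ContinuousLinearMap.id ℝ C(X, ℝ) + M)) (1 : C(X, ℝ)) x ∂μ := by
    intro W M hW hM T hT
    have hlow : ∀ x, Real.exp (-(T * c)) ≤
        opExp (T • (L - ContinuousLinearMap.id ℝ C(X, ℝ) + M)) (1 : C(X, ℝ)) x := by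
      intro x
      have h := le_opExp_apply (hpos W M hW hM T hT) (f := 1) zero_le_one x
      rw [opExp_add_smul_id, ContinuousMap.smul_apply, smul_eq_mul, ContinuousMap.one_apply] at h
      rw [Real.exp_neg]
      exact (inv_le_iff_one_le_mul₀' (Real.exp_pos _)).mpr h
    have h := integral_mono (μ := μ) (integrable_const _) (hint _) hlow
    simp only [integral_const, probReal_univ, one_smul] at h
    exact (Real.exp_pos _).trans_le h
  refine le_of_tendsto_of_tendsto hqV (hqU.add_const K) ?_
  filter_upwards [eventually_gt_atTop 0] with T hT
  have hle : ∀ x, opExp (T • (L - ContinuousLinearMap.id ℝ C(X, ℝ) + MV)) (1 : C(X, ℝ)) x ≤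
      Real.exp (T * K) *
        opExp (T • (L - ContinuousLinearMap.id ℝ C(X, ℝ) + MU)) (1 : C(X, ℝ)) x := by
    intro x
    have h := opExp_apply_le (B₂ := T • (L - ContinuousLinearMap.id ℝ C(X, ℝ) + MU)
        + (T * c + T * K) • ContinuousLinearMap.id ℝ C(X, ℝ)) (hpos V MV hcV' hMV T hT) ?_
        (f := 1) zero_le_one x
    · rw [opExp_add_smul_id, opExp_add_smul_id, ContinuousMap.smul_apply,
        ContinuousMap.smul_apply, smul_eq_mul, smul_eq_mul, Real.exp_add, mul_assoc] at h
      exact le_of_mul_le_mul_left h (Real.exp_pos _)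
    · intro f hf y
      have hfy : 0 ≤ f y := hf y
      have h1 := mul_nonneg hT.le (mul_nonneg (sub_nonneg.mpr (hK y)) hfy)
      simp [hMU, hMV]
      linarith
  have h := integral_mono (μ := μ) (hint _) ((hint _).const_mul _) hle
  rw [integral_const_mul] at h
  have hlog := Real.log_le_log (hIpos V MV hcV' hMV T hT) h
  rw [Real.log_mul (Real.exp_pos _).ne' (hIpos U MU hcU' hMU T hT).ne', Real.log_exp] at hlog
  have h2 := mul_le_mul_of_nonneg_left hlog (one_div_pos.mpr hT).le
  have h3 : 1 / T * (T * K) = K := by field_simp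
  rw [mul_add, h3] at h2
  linarith

/-- **The free energy is 1-Lipschitz in the potential.** -/
theorem stmt_17 (d : ℕ) (hd : 2 ≤ d) (θ : ℝ) (hθ0 : 0 < θ) (hθ1 : θ < 1)
    (A : (ℕ → Fin d) → ℝ)
    (CA : ℝ) (hALip : ∀ x y, |A x - A y| ≤ CA * distTheta θ x y)
    (hAnorm : ∀ x, ∑ a : Fin d, Real.exp (A (cons a x)) = 1)
    (μA : Measure (ℕ → Fin d)) (hμAp : IsProbabilityMeasure μA)
    (hμAinv : ∀ f : C((ℕ → Fin d), ℝ), ∫ x, ruelleSum A f x ∂μA = ∫ x, f x ∂μA)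
    (U V : (ℕ → Fin d) → ℝ) (hU : Continuous U) (hV : Continuous V)
    (LA MU MV : C((ℕ → Fin d), ℝ) →L[ℝ] C((ℕ → Fin d), ℝ))
    (hLA : ∀ (f : C((ℕ → Fin d), ℝ)) (x), LA f x = ruelleSum A f x)
    (hMU : ∀ (f : C((ℕ → Fin d), ℝ)) (x), MU f x = U x * f x)
    (hMV : ∀ (f : C((ℕ → Fin d), ℝ)) (x), MV f x = V x * f x)
    (qU qV : ℝ)
    (hqU : Tendsto (fun T : ℝ => (1 / T) * Real.log
        (∫ x, opExp (T • (LA - ContinuousLinearMap.id ℝ C((ℕ → Fin d), ℝ) + MU))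
          (1 : C((ℕ → Fin d), ℝ)) x ∂μA)) atTop (nhds qU))
    (hqV : Tendsto (fun T : ℝ => (1 / T) * Real.log
        (∫ x, opExp (T • (LA - ContinuousLinearMap.id ℝ C((ℕ → Fin d), ℝ) + MV))
          (1 : C((ℕ → Fin d), ℝ)) x ∂μA)) atTop (nhds qV)) :
    |qV - qU| ≤ ⨆ x : ℕ → Fin d, |V x - U x| := by
  have hL : ∀ f : C((ℕ → Fin d), ℝ), 0 ≤ f → 0 ≤ LA f := by
    intro f hf x
    change 0 ≤ LA f x
    rw [hLA]
    exact Finset.sum_nonneg fun a _ => mul_nonneg (Real.exp_pos _).le (hf _)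
  have hbdd : BddAbove (Set.range fun x => |V x - U x|) :=
    (isCompact_range (by fun_prop)).bddAbove
  have hsup : ∀ x, |V x - U x| ≤ ⨆ x : ℕ → Fin d, |V x - U x| := fun x => le_ciSup hbdd x
  have hVU := freeEnergy_le μA LA MU MV hL hU hV hMU hMV (K := ⨆ x, |V x - U x|)
    (fun x => by linarith [(abs_le.mp (hsup x)).2]) hqU hqV
  have hUV := freeEnergy_le μA LA MV MU hL hV hU hMV hMU (K := ⨆ x, |V x - U x|)
    (fun x => by linarith [(abs_le.mp (hsup x)).1]) hqV hqU
  exact abs_le.mpr ⟨by linarith, by linarith⟩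
end
end

section
/- Convexity of the free energy: let A : X → ℝ be a normalized Lipschitz potential and μ_A a Borel probability on X with ∫ 𝓛_A f dμ_A = ∫ f dμ_A for all f ∈ C(X,ℝ). Let U, V : X → ℝ be continuous, let α ∈ (0,1), and let q_V, q_U, q_α ∈ ℝ be such that (1/T)·log ∫ e^{T(𝓛_A − I + M_W)}(1) dμ_A converges as T → ∞ to q_V, q_U and q_α for W = V, W = U and W = α·V + (1−α)·U respectively. Then q_α ≤ α·q_V + (1 − α)·q_U. -/
/-!
Write `B_W = 𝓛_A - I + M_W`, `β = 1 - α` and `W = α V + β U`. By weighted AM-GM, the log-convexity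
inequality `f ≤ g ^ α * h ^ β` between positive numbers is equivalent to the family of *linear*
inequalities `f ≤ α e^{β t} g + β e^{-α t} h`, `t ∈ ℝ`. In this form it passes through any positive
linear operator (in particular `𝓛_A` and integration against `μ_A`), and multiplying `f`, `g`, `h` by
`e^{s W}`, `e^{s V}`, `e^{s U}` only shifts the parameter `t` by `s (V - U)`.

The semigroup is reached through Euler's formula `e^{T B} f = lim (1 + (T / n) B)^n f`
(`tendsto_euler_opExp`). One Euler step `1 + s B_W` preserves the family up to a factor `e^{O(s²)}`,
because `1 + y ≤ e^y ≤ (1 + y) e^{2 y²}` for `y ≥ -1/2`; after `n` steps with `s = T / n` the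
accumulated factor is `e^{O(1 / n)}` (`euler_iterate_le`). In the limit, the family holds for
`e^{T B_W} 1`, `e^{T B_V} 1`, `e^{T B_U} 1` pointwise, hence for their integrals, and optimizing
in `t` gives `log ∫ e^{T B_W} 1 ≤ α log ∫ e^{T B_V} 1 + β log ∫ e^{T B_U} 1`. All three integrals are
positive, since each of the three functions is at least `e^{-T K}` if `|V - 1|, |U - 1| ≤ K`.
Dividing by `T` and letting `T → ∞` finishes.
-/

open MeasureTheory Filter

noncomputable section

/-- Euler's formula for the exponential of a bounded operator, by dominated convergence for the
series `∑ k, (n.choose k / n ^ k) • B ^ k f`, whose coefficients are at most `1 / k!`. -/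
lemma tendsto_euler_opExp {X : Type*} [TopologicalSpace X] [CompactSpace X]
    (B : C(X, ℝ) →L[ℝ] C(X, ℝ)) (f : C(X, ℝ)) :
    Tendsto (fun n : ℕ => ((1 + (n : ℝ)⁻¹ • B) ^ n) f) atTop (nhds (opExp B f)) := by
  have hsmul : ∀ (r : ℝ) (k : ℕ), ((r • B) ^ k) f = r ^ k • (B ^ k) f := by
    intro r k
    induction k with
    | zero => simp
    | succ k ih =>
      rw [pow_succ', mul_apply_eq_comp, ih, pow_succ' B, mul_apply_eq_comp,
        smul_apply, map_smul, smul_smul, pow_succ']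
  have hnorm : ∀ k : ℕ, ‖(B ^ k) f‖ ≤ ‖B‖ ^ k * ‖f‖ := by
    intro k
    induction k with
    | zero => simp
    | succ k ih =>
      rw [pow_succ', mul_apply_eq_comp, pow_succ', mul_assoc]
      exact (B.le_opNorm _).trans (mul_le_mul_of_nonneg_left ih (norm_nonneg _))
  have hexp : ∀ n : ℕ, ((1 + (n : ℝ)⁻¹ • B) ^ n) f =
      ∑' k : ℕ, ((n.choose k : ℝ) / (n : ℝ) ^ k) • (B ^ k) f := by
    intro n
    rw [tsum_eq_sum (s := Finset.range (n + 1))]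
    · rw [add_comm, (Commute.one_right _).add_pow, sum_apply]
      refine Finset.sum_congr rfl fun k _ => ?_
      have : (((n.choose k : ℕ) : C(X, ℝ) →L[ℝ] C(X, ℝ))) f = (n.choose k : ℝ) • f := by
        rw [Nat.cast_smul_eq_nsmul, ← nsmul_one, smul_apply]
        rfl
      rw [one_pow, mul_one, mul_apply_eq_comp, this, map_smul, hsmul,
        smul_smul, inv_pow, div_eq_mul_inv]
    · intro k hk
      have : n < k := by simpa using hk
      simp [Nat.choose_eq_zero_of_lt this]
  simp_rw [hexp]
  unfold opExp
  have hcoef : ∀ k n : ℕ, (n.choose k : ℝ) / (n : ℝ) ^ k ≤ (k.factorial : ℝ)⁻¹ := by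
    intro k n
    rcases eq_or_lt_of_le (pow_nonneg (Nat.cast_nonneg (α := ℝ) n) k) with h | h
    · rw [← h]; simp
    · rw [div_le_iff₀ h, mul_comm, ← div_eq_mul_inv]
      exact Nat.choose_le_pow_div k n
  refine tendsto_tsum_of_dominated_convergence
    (bound := fun k : ℕ => ‖B‖ ^ k / (k.factorial : ℝ) * ‖f‖) ?_ ?_ ?_
  · exact (Real.summable_pow_div_factorial ‖B‖).mul_right _
  · intro k
    refine Tendsto.smul_const ?_ _
    have h1 : Tendsto (fun n : ℕ => (n.choose k : ℝ) / ((n : ℝ) ^ k / k.factorial))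
        atTop (nhds 1) := by
      refine (Asymptotics.isEquivalent_iff_tendsto_one ?_).1 (isEquivalent_choose k)
      filter_upwards [eventually_gt_atTop 0] with n hn
      positivity
    have h2 := h1.mul_const ((k.factorial : ℝ)⁻¹)
    rw [one_mul] at h2
    refine h2.congr fun n => ?_
    have : (k.factorial : ℝ) ≠ 0 := by positivity
    rw [div_div_eq_mul_div, div_mul_eq_mul_div, mul_assoc, mul_inv_cancel₀ this, mul_one]
  · refine Eventually.of_forall fun n k => ?_
    rw [norm_smul, Real.norm_of_nonneg (by positivity)]
    calc _ ≤ (k.factorial : ℝ)⁻¹ * (‖B‖ ^ k * ‖f‖) :=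
          mul_le_mul (hcoef k n) (hnorm k) (norm_nonneg _) (by positivity)
      _ = _ := by ring

lemma exp_le_one_add_mul_exp {y : ℝ} (hy : -(1 / 2) ≤ y) :
    Real.exp y ≤ (1 + y) * Real.exp (2 * y ^ 2) := by
  have h := Real.add_one_le_exp (2 * y ^ 2 - y)
  have h1 : 1 ≤ (1 + y) * (2 * y ^ 2 - y + 1) := by nlinarith [sq_nonneg y]
  have h2 : 1 ≤ (1 + y) * Real.exp (2 * y ^ 2 - y) :=
    h1.trans (mul_le_mul_of_nonneg_left h (by linarith))
  rw [Real.exp_sub, mul_div_assoc', le_div_iff₀ (Real.exp_pos _), one_mul] at h2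
  exact h2

lemma ruelleSum_mono {d : ℕ} (A : (ℕ → Fin d) → ℝ) {f g : (ℕ → Fin d) → ℝ}
    (h : ∀ x, f x ≤ g x) (x : ℕ → Fin d) : ruelleSum A f x ≤ ruelleSum A g x :=
  Finset.sum_le_sum fun _ _ => mul_le_mul_of_nonneg_left (h _) (Real.exp_pos _).le

lemma ruelleSum_nonneg {d : ℕ} (A : (ℕ → Fin d) → ℝ) {f : (ℕ → Fin d) → ℝ}
    (h : ∀ x, 0 ≤ f x) (x : ℕ → Fin d) : 0 ≤ ruelleSum A f x :=
  Finset.sum_nonneg fun _ _ => mul_nonneg (Real.exp_pos _).le (h _)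

lemma ruelleSum_lin {d : ℕ} (A g h : (ℕ → Fin d) → ℝ) (a b : ℝ) (x : ℕ → Fin d) :
    ruelleSum A (fun y => a * g y + b * h y) x = a * ruelleSum A g x + b * ruelleSum A h x := by
  simp only [ruelleSum, Finset.mul_sum, ← Finset.sum_add_distrib]
  exact Finset.sum_congr rfl fun _ _ => by ring

/-- `IsEulerStep A W s P` says that `P = 1 + s (𝓛_A - I + M_W)`, one step of the explicit Euler
scheme of size `s`. -/
def IsEulerStep {d : ℕ} (A W : (ℕ → Fin d) → ℝ) (s : ℝ)
    (P : C((ℕ → Fin d), ℝ) →L[ℝ] C((ℕ → Fin d), ℝ)) : Prop :=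
  ∀ f x, P f x = (1 + s * (W x - 1)) * f x + s * ruelleSum A f x

lemma isEulerStep {d : ℕ} {A W : (ℕ → Fin d) → ℝ}
    {L M : C((ℕ → Fin d), ℝ) →L[ℝ] C((ℕ → Fin d), ℝ)}
    (hL : ∀ f x, L f x = ruelleSum A f x) (hM : ∀ f x, M f x = W x * f x) (r T : ℝ) :
    IsEulerStep A W (r * T)
      (1 + r • T • (L - ContinuousLinearMap.id ℝ C((ℕ → Fin d), ℝ) + M)) := by
  intro f x
  simp [hL, hM]
  ring

lemma euler_iterate_ge {d : ℕ} {A W : (ℕ → Fin d) → ℝ} {s K : ℝ} (hs : 0 ≤ s)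
    (hsK : s * K ≤ 1 / 2) (hW : ∀ x, |W x - 1| ≤ K)
    {P : C((ℕ → Fin d), ℝ) →L[ℝ] C((ℕ → Fin d), ℝ)} (hP : IsEulerStep A W s P) (n : ℕ) :
    ∀ x, (1 - s * K) ^ n ≤ (P ^ n) 1 x := by
  induction n with
  | zero => intro x; simp
  | succ n ih =>
    intro x
    rw [pow_succ' P, mul_apply_eq_comp, hP, pow_succ']
    have h0 : 0 ≤ (1 - s * K) ^ n := pow_nonneg (by linarith) n
    have h1 : 0 ≤ ruelleSum A ((P ^ n) 1) x := ruelleSum_nonneg A (fun y => h0.trans (ih y)) x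
    have h2 : 1 - s * K ≤ 1 + s * (W x - 1) := by
      have := mul_le_mul_of_nonneg_left (abs_le.1 (hW x)).1 hs
      linarith
    have h3 := mul_le_mul h2 (ih x) h0 (by linarith)
    have h4 := mul_nonneg hs h1
    linarith

/-- The linearized log-convexity inequality for Euler iterates, with error factor `e^{2 (s K)²}`
per step. The diagonal term is handled by using the induction hypothesis at the shifted parameter
`t + s (V x - U x)`. -/
lemma euler_iterate_le {d : ℕ} {A U V : (ℕ → Fin d) → ℝ} {α s K : ℝ} (hα0 : 0 < α) (hα1 : α < 1)
    (hs : 0 ≤ s) (hsK : s * K ≤ 1 / 2)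
    (hU : ∀ x, |U x - 1| ≤ K) (hV : ∀ x, |V x - 1| ≤ K)
    (hW : ∀ x, |(α * V x + (1 - α) * U x) - 1| ≤ K)
    {PU PV PW : C((ℕ → Fin d), ℝ) →L[ℝ] C((ℕ → Fin d), ℝ)}
    (hPU : IsEulerStep A U s PU) (hPV : IsEulerStep A V s PV)
    (hPW : IsEulerStep A (fun x => α * V x + (1 - α) * U x) s PW) (n : ℕ) :
    ∀ x t, (PW ^ n) 1 x ≤ Real.exp (2 * (s * K) ^ 2) ^ n *
      (α * Real.exp ((1 - α) * t) * (PV ^ n) 1 x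
        + (1 - α) * Real.exp (-(α * t)) * (PU ^ n) 1 x) := by
  have hβ : 0 < 1 - α := by linarith
  have hpow : ∀ n : ℕ, 0 ≤ (1 - s * K) ^ n := fun n => pow_nonneg (by linarith) n
  set c := Real.exp (2 * (s * K) ^ 2) with hc
  have hc1 : 1 ≤ c := Real.one_le_exp (by positivity)
  -- one diagonal step costs at most the factor `c`
  have hstep : ∀ v : ℝ, |v| ≤ K → Real.exp (s * v) ≤ c * (1 + s * v) := by
    intro v hv
    have h1 : |s * v| ≤ s * K := by
      rw [abs_mul, abs_of_nonneg hs]; exact mul_le_mul_of_nonneg_left hv hs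
    have h2 : -(1 / 2) ≤ s * v := by linarith [(abs_le.1 h1).1]
    have h3 : (s * v) ^ 2 ≤ (s * K) ^ 2 := by
      rw [← sq_abs]; exact pow_le_pow_left₀ (abs_nonneg _) h1 2
    refine (exp_le_one_add_mul_exp h2).trans ?_
    rw [mul_comm]
    exact mul_le_mul_of_nonneg_right (Real.exp_le_exp.2 (by linarith)) (by linarith)
  induction n with
  | zero =>
    intro x t
    -- weighted AM-GM in the form `α e^a + β e^b ≥ α (1 + a) + β (1 + b) = 1`
    have h1 := mul_le_mul_of_nonneg_left (Real.add_one_le_exp ((1 - α) * t)) hα0.le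
    have h2 := mul_le_mul_of_nonneg_left (Real.add_one_le_exp (-(α * t))) hβ.le
    simp only [pow_zero, one_apply_eq_self, ContinuousMap.one_apply]
    linarith
  | succ n ih =>
    intro x t
    have hg : ∀ y, 0 ≤ (PV ^ n) 1 y := fun y =>
      (hpow n).trans (euler_iterate_ge hs hsK hV hPV n y)
    have hh : ∀ y, 0 ≤ (PU ^ n) 1 y := fun y =>
      (hpow n).trans (euler_iterate_ge hs hsK hU hPU n y)
    have hf : ∀ y, 0 ≤ (PW ^ n) 1 y := fun y =>
      (hpow n).trans (euler_iterate_ge hs hsK hW hPW n y)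
    rw [pow_succ' PV, pow_succ' PU, pow_succ' PW, mul_apply_eq_comp,
      mul_apply_eq_comp, mul_apply_eq_comp, hPW, hPV, hPU]
    have hcn : 0 ≤ c ^ n := pow_nonneg (by linarith) n
    set a := α * Real.exp ((1 - α) * t) with ha
    set b := (1 - α) * Real.exp (-(α * t)) with hb
    have ha0 : 0 ≤ a := by positivity
    have hb0 : 0 ≤ b := by positivity
    have hL : ruelleSum A ((PW ^ n) 1) x ≤ c ^ (n + 1) *
        (a * ruelleSum A ((PV ^ n) 1) x + b * ruelleSum A ((PU ^ n) 1) x) := by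
      have h1 := ruelleSum_mono A (fun y => (ih y t).trans_eq
        (show _ = (c ^ n * a) * (PV ^ n) 1 y + (c ^ n * b) * (PU ^ n) 1 y by ring)) x
      rw [ruelleSum_lin] at h1
      have h2 : 0 ≤ a * ruelleSum A ((PV ^ n) 1) x + b * ruelleSum A ((PU ^ n) 1) x :=
        add_nonneg (mul_nonneg ha0 (ruelleSum_nonneg A hg x))
          (mul_nonneg hb0 (ruelleSum_nonneg A hh x))
      have h3 := mul_le_mul_of_nonneg_right
        (pow_le_pow_right₀ hc1 (Nat.le_succ n)) h2
      calc _ ≤ _ := h1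
        _ = c ^ n * (a * ruelleSum A ((PV ^ n) 1) x + b * ruelleSum A ((PU ^ n) 1) x) := by ring
        _ ≤ _ := h3
    have hD : (1 + s * ((α * V x + (1 - α) * U x) - 1)) * (PW ^ n) 1 x ≤ c ^ (n + 1) *
        (a * ((1 + s * (V x - 1)) * (PV ^ n) 1 x) + b * ((1 + s * (U x - 1)) * (PU ^ n) 1 x)) := by
      have e1 : Real.exp (s * ((α * V x + (1 - α) * U x) - 1)) *
          (α * Real.exp ((1 - α) * (t + s * (V x - U x)))) = a * Real.exp (s * (V x - 1)) := by
        rw [ha, mul_left_comm, ← Real.exp_add, mul_assoc, ← Real.exp_add]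
        ring_nf
      have e2 : Real.exp (s * ((α * V x + (1 - α) * U x) - 1)) *
          ((1 - α) * Real.exp (-(α * (t + s * (V x - U x))))) =
            b * Real.exp (s * (U x - 1)) := by
        rw [hb, mul_left_comm, ← Real.exp_add, mul_assoc, ← Real.exp_add]
        ring_nf
      calc _ ≤ Real.exp (s * ((α * V x + (1 - α) * U x) - 1)) * (PW ^ n) 1 x := by
            refine mul_le_mul_of_nonneg_right ?_ (hf x)
            linarith [Real.add_one_le_exp (s * ((α * V x + (1 - α) * U x) - 1))]
        _ ≤ Real.exp (s * ((α * V x + (1 - α) * U x) - 1)) * (c ^ n *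
            (α * Real.exp ((1 - α) * (t + s * (V x - U x))) * (PV ^ n) 1 x
              + (1 - α) * Real.exp (-(α * (t + s * (V x - U x)))) * (PU ^ n) 1 x)) :=
            mul_le_mul_of_nonneg_left (ih x _) (Real.exp_pos _).le
        _ = c ^ n * (a * (Real.exp (s * (V x - 1)) * (PV ^ n) 1 x)
              + b * (Real.exp (s * (U x - 1)) * (PU ^ n) 1 x)) := by
            linear_combination c ^ n * (PV ^ n) 1 x * e1 + c ^ n * (PU ^ n) 1 x * e2
        _ ≤ c ^ n * (a * ((c * (1 + s * (V x - 1))) * (PV ^ n) 1 x)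
              + b * ((c * (1 + s * (U x - 1))) * (PU ^ n) 1 x)) := by
            have h1 := mul_le_mul_of_nonneg_right (hstep _ (hV x)) (hg x)
            have h2 := mul_le_mul_of_nonneg_right (hstep _ (hU x)) (hh x)
            exact mul_le_mul_of_nonneg_left (add_le_add (mul_le_mul_of_nonneg_left h1 ha0)
              (mul_le_mul_of_nonneg_left h2 hb0)) hcn
        _ = _ := by ring
    have := add_le_add hD (mul_le_mul_of_nonneg_left hL hs)
    refine this.trans_eq ?_
    ring

lemma tendsto_euler_apply {d : ℕ} (B : C((ℕ → Fin d), ℝ) →L[ℝ] C((ℕ → Fin d), ℝ))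
    (x : ℕ → Fin d) :
    Tendsto (fun n : ℕ => ((1 + (n : ℝ)⁻¹ • B) ^ n) 1 x) atTop (nhds (opExp B 1 x)) :=
  ((ContinuousEvalConst.continuous_eval_const x).tendsto _).comp (tendsto_euler_opExp B 1)

lemma eventually_step_small (T K : ℝ) : ∀ᶠ n : ℕ in atTop, (n : ℝ)⁻¹ * T * K ≤ 1 / 2 := by
  have h : Tendsto (fun n : ℕ => (n : ℝ)⁻¹ * T * K) atTop (nhds (0 * T * K)) :=
    ((tendsto_inv_atTop_nhds_zero_nat (𝕜 := ℝ)).mul_const T).mul_const K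
  rw [zero_mul, zero_mul] at h
  exact h.eventually (eventually_le_nhds (by norm_num))

lemma opExp_ge {d : ℕ} {A W : (ℕ → Fin d) → ℝ} {K T : ℝ} (hT : 0 ≤ T)
    (hW : ∀ x, |W x - 1| ≤ K) {L M : C((ℕ → Fin d), ℝ) →L[ℝ] C((ℕ → Fin d), ℝ)}
    (hL : ∀ f x, L f x = ruelleSum A f x) (hM : ∀ f x, M f x = W x * f x) (x : ℕ → Fin d) :
    Real.exp (-(T * K)) ≤
      opExp (T • (L - ContinuousLinearMap.id ℝ C((ℕ → Fin d), ℝ) + M)) 1 x := by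
  refine le_of_tendsto_of_tendsto (Real.tendsto_one_add_div_pow_exp (-(T * K)))
    (tendsto_euler_apply _ x) ?_
  filter_upwards [eventually_step_small T K] with n hn
  refine le_of_eq_of_le ?_
    (euler_iterate_ge (by positivity) hn hW (isEulerStep hL hM (n : ℝ)⁻¹ T) n x)
  congr 1
  ring

/-- The linearized form of `e^{T B_W} 1 ≤ (e^{T B_V} 1) ^ α * (e^{T B_U} 1) ^ (1 - α)`, where
`W = α V + (1 - α) U`. -/
lemma opExp_le {d : ℕ} {A U V : (ℕ → Fin d) → ℝ} {α K T : ℝ} (hα0 : 0 < α) (hα1 : α < 1)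
    (hT : 0 ≤ T) (hU : ∀ x, |U x - 1| ≤ K) (hV : ∀ x, |V x - 1| ≤ K)
    (hW : ∀ x, |(α * V x + (1 - α) * U x) - 1| ≤ K)
    {L MU MV MW : C((ℕ → Fin d), ℝ) →L[ℝ] C((ℕ → Fin d), ℝ)}
    (hL : ∀ f x, L f x = ruelleSum A f x) (hMU : ∀ f x, MU f x = U x * f x)
    (hMV : ∀ f x, MV f x = V x * f x)
    (hMW : ∀ f x, MW f x = (α * V x + (1 - α) * U x) * f x) (x : ℕ → Fin d) (t : ℝ) :
    opExp (T • (L - ContinuousLinearMap.id ℝ C((ℕ → Fin d), ℝ) + MW)) 1 x ≤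
      α * Real.exp ((1 - α) * t) *
          opExp (T • (L - ContinuousLinearMap.id ℝ C((ℕ → Fin d), ℝ) + MV)) 1 x
        + (1 - α) * Real.exp (-(α * t)) *
          opExp (T • (L - ContinuousLinearMap.id ℝ C((ℕ → Fin d), ℝ) + MU)) 1 x := by
  have hc : Tendsto (fun n : ℕ => Real.exp (2 * ((n : ℝ)⁻¹ * T * K) ^ 2) ^ n) atTop (nhds 1) := by
    have h : Tendsto (fun n : ℕ => Real.exp ((n : ℝ)⁻¹ * (2 * (T * K) ^ 2))) atTop
        (nhds (Real.exp (0 * (2 * (T * K) ^ 2)))) :=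
      (Real.continuous_exp.tendsto _).comp
        ((tendsto_inv_atTop_nhds_zero_nat (𝕜 := ℝ)).mul_const _)
    rw [zero_mul, Real.exp_zero] at h
    refine h.congr' ?_
    filter_upwards [eventually_gt_atTop 0] with n hn
    have : (n : ℝ) ≠ 0 := by positivity
    rw [← Real.exp_nat_mul]
    congr 1
    field_simp
  have hlim := hc.mul (((tendsto_euler_apply
      (T • (L - ContinuousLinearMap.id ℝ C((ℕ → Fin d), ℝ) + MV)) x).const_mul
        (α * Real.exp ((1 - α) * t))).add
    ((tendsto_euler_apply (T • (L - ContinuousLinearMap.id ℝ C((ℕ → Fin d), ℝ) + MU)) x).const_mul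
        ((1 - α) * Real.exp (-(α * t)))))
  rw [one_mul] at hlim
  refine le_of_tendsto_of_tendsto (tendsto_euler_apply _ x) hlim ?_
  filter_upwards [eventually_step_small T K] with n hn
  exact euler_iterate_le hα0 hα1 (by positivity) hn hU hV hW (isEulerStep hL hMU (n : ℝ)⁻¹ T)
    (isEulerStep hL hMV (n : ℝ)⁻¹ T) (isEulerStep hL hMW (n : ℝ)⁻¹ T) n x t

/-- The optimal parameter in the linearized inequality is `t = log h - log g`. -/
lemma log_le_of_forall_le {f g h α : ℝ} (hf : 0 < f) (hg : 0 < g) (hh : 0 < h)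
    (H : ∀ t, f ≤ α * Real.exp ((1 - α) * t) * g + (1 - α) * Real.exp (-(α * t)) * h) :
    Real.log f ≤ α * Real.log g + (1 - α) * Real.log h := by
  rw [Real.log_le_iff_le_exp hf]
  refine (H (Real.log h - Real.log g)).trans_eq ?_
  have e1 : Real.exp ((1 - α) * (Real.log h - Real.log g)) * g =
      Real.exp (α * Real.log g + (1 - α) * Real.log h) := by
    nth_rewrite 2 [← Real.exp_log hg]
    rw [← Real.exp_add]
    ring_nf
  have e2 : Real.exp (-(α * (Real.log h - Real.log g))) * h =
      Real.exp (α * Real.log g + (1 - α) * Real.log h) := by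
    nth_rewrite 2 [← Real.exp_log hh]
    rw [← Real.exp_add]
    ring_nf
  linear_combination α * e1 + (1 - α) * e2

/-- **Convexity of the free energy.** -/
theorem stmt_18 (d : ℕ) (hd : 2 ≤ d) (θ : ℝ) (hθ0 : 0 < θ) (hθ1 : θ < 1)
    (A : (ℕ → Fin d) → ℝ)
    (CA : ℝ) (hALip : ∀ x y, |A x - A y| ≤ CA * distTheta θ x y)
    (hAnorm : ∀ x, ∑ a : Fin d, Real.exp (A (cons a x)) = 1)
    (μA : Measure (ℕ → Fin d)) (hμAp : IsProbabilityMeasure μA)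
    (hμAinv : ∀ f : C((ℕ → Fin d), ℝ), ∫ x, ruelleSum A f x ∂μA = ∫ x, f x ∂μA)
    (U V : (ℕ → Fin d) → ℝ) (hU : Continuous U) (hV : Continuous V)
    (α : ℝ) (hα0 : 0 < α) (hα1 : α < 1)
    (LA MU MV Mα : C((ℕ → Fin d), ℝ) →L[ℝ] C((ℕ → Fin d), ℝ))
    (hLA : ∀ (f : C((ℕ → Fin d), ℝ)) (x), LA f x = ruelleSum A f x)
    (hMU : ∀ (f : C((ℕ → Fin d), ℝ)) (x), MU f x = U x * f x)
    (hMV : ∀ (f : C((ℕ → Fin d), ℝ)) (x), MV f x = V x * f x)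
    (hMα : ∀ (f : C((ℕ → Fin d), ℝ)) (x), Mα f x = (α * V x + (1 - α) * U x) * f x)
    (qU qV qα : ℝ)
    (hqV : Tendsto (fun T : ℝ => (1 / T) * Real.log
        (∫ x, opExp (T • (LA - ContinuousLinearMap.id ℝ C((ℕ → Fin d), ℝ) + MV))
          (1 : C((ℕ → Fin d), ℝ)) x ∂μA)) atTop (nhds qV))
    (hqU : Tendsto (fun T : ℝ => (1 / T) * Real.log
        (∫ x, opExp (T • (LA - ContinuousLinearMap.id ℝ C((ℕ → Fin d), ℝ) + MU))
          (1 : C((ℕ → Fin d), ℝ)) x ∂μA)) atTop (nhds qU))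
    (hqα : Tendsto (fun T : ℝ => (1 / T) * Real.log
        (∫ x, opExp (T • (LA - ContinuousLinearMap.id ℝ C((ℕ → Fin d), ℝ) + Mα))
          (1 : C((ℕ → Fin d), ℝ)) x ∂μA)) atTop (nhds qα)) :
    qα ≤ α * qV + (1 - α) * qU := by
  obtain ⟨K, hUK, hVK⟩ : ∃ K, (∀ x, |U x - 1| ≤ K) ∧ ∀ x, |V x - 1| ≤ K := by
    let fU : C((ℕ → Fin d), ℝ) := ⟨fun x => U x - 1, by fun_prop⟩
    let fV : C((ℕ → Fin d), ℝ) := ⟨fun x => V x - 1, by fun_prop⟩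
    exact ⟨max ‖fU‖ ‖fV‖, fun x => (fU.norm_coe_le_norm x).trans (le_max_left _ _),
      fun x => (fV.norm_coe_le_norm x).trans (le_max_right _ _)⟩
  have hWK : ∀ x, |(α * V x + (1 - α) * U x) - 1| ≤ K := by
    intro x
    have hu := abs_le.1 (hUK x)
    have hv := abs_le.1 (hVK x)
    rw [abs_le]
    constructor <;> nlinarith
  have hint : ∀ f : C((ℕ → Fin d), ℝ), Integrable (fun x => f x) μA := fun f =>
    f.continuous.integrable_of_hasCompactSupport (HasCompactSupport.of_compactSpace _)
  have hpos : ∀ (f : C((ℕ → Fin d), ℝ)) (r : ℝ), (∀ x, Real.exp r ≤ f x) → 0 < ∫ x, f x ∂μA := by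
    intro f r hf
    have h := integral_mono (integrable_const (Real.exp r)) (hint f) hf
    simp only [integral_const, probReal_univ, one_smul] at h
    exact (Real.exp_pos r).trans_le h
  refine le_of_tendsto_of_tendsto hqα ((hqV.const_mul α).add (hqU.const_mul (1 - α))) ?_
  filter_upwards [eventually_gt_atTop 0] with T hT
  have key := log_le_of_forall_le (α := α)
    (hpos _ _ (opExp_ge hT.le hWK hLA hMα)) (hpos _ _ (opExp_ge hT.le hVK hLA hMV))
    (hpos _ _ (opExp_ge hT.le hUK hLA hMU)) (fun t => by
      rw [← integral_const_mul, ← integral_const_mul, ← integral_add ((hint _).const_mul _)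
        ((hint _).const_mul _)]
      exact integral_mono (hint _) (((hint _).const_mul _).add ((hint _).const_mul _))
        fun x => opExp_le hα0 hα1 hT.le hUK hVK hWK hLA hMU hMV hMα x t)
  refine (mul_le_mul_of_nonneg_left key (one_div_pos.2 hT).le).trans_eq ?_
  ring
end
end
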